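/- arXiv:math/0503050 — 14 statements merged into one kernel-verified Lean document; each statement's English description precedes it below -/
import Mathlib

section
/- Let d be a positive integer and let M be a matroid on a finite ground set E. Then the collection of d-Laman independent subsets of E is the collection of independent sets of a matroid on E; that is, there exists a matroid L^d(M) on ground set E such that a subset A ⊆ E is independent in L^d(M) if and only if A is d-Laman independent in M. -/
/-- The rank function of a matroid: the largest cardinality of an independent
subset of `A` (with `Set.ncard` conventions; this is the usual rank function
when the ground set is finite). -/
noncomputable def Matroid.rankFun {α : Type*} (M : Matroid α) (A : Set α) : ℕ :=
  sSup (Set.ncard '' {I : Set α | M.Indep I ∧ I ⊆ A})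

/-- For a real number `m > 1`, a subset `A` of the ground set of a matroid `M` is
`m`-Laman independent if `m * r(A') > |A'|` for every nonempty `A' ⊆ A`. -/
def Matroid.LamanIndep {α : Type*} (M : Matroid α) (m : ℝ) (A : Set α) : Prop :=
  ∀ A' ⊆ A, A'.Nonempty → (A'.ncard : ℝ) < m * (M.rankFun A' : ℝ)

theorem laman_aux_span {α : Type*} [DecidableEq α] (f : Finset α → ℤ) (hmono : Monotone f)
    (hsub : ∀ A B : Finset α, (A ∩ B).Nonempty → f (A ∪ B) + f (A ∩ B) ≤ f A + f B)
    (T : Finset α) (hT : T.Nonempty) (S : Finset α) (hS : ∀ e ∈ S, f (insert e T) ≤ f T) :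
    f (T ∪ S) ≤ f T := by
  induction S using Finset.induction_on with
  | empty => simp
  | insert e S he ih =>
    have ih := ih (fun x hx => hS x (Finset.mem_insert_of_mem hx))
    have h1 := hS e (Finset.mem_insert_self e S)
    have hsubT : T ⊆ (T ∪ S) ∩ insert e T :=
      Finset.subset_inter Finset.subset_union_left (Finset.subset_insert e T)
    have h2 := hsub (T ∪ S) (insert e T) (hT.mono hsubT)
    have h3 := hmono hsubT
    have h4 : f (T ∪ insert e S) ≤ f ((T ∪ S) ∪ insert e T) := hmono (by
      intro x; simp only [Finset.mem_union, Finset.mem_insert]; tauto)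
    linarith

theorem laman_aux_aug {α : Type*} [DecidableEq α] (f : Finset α → ℤ) (hmono : Monotone f)
    (hsub : ∀ A B : Finset α, (A ∩ B).Nonempty → f (A ∪ B) + f (A ∩ B) ≤ f A + f B)
    (I J : Finset α) (hI : ∀ A ⊆ I, A.Nonempty → (A.card : ℤ) ≤ f A)
    (hJ : ∀ A ⊆ J, A.Nonempty → (A.card : ℤ) ≤ f A) (hIJ : I.card < J.card) :
    ∃ e ∈ J, e ∉ I ∧ ∀ A ⊆ insert e I, A.Nonempty → (A.card : ℤ) ≤ f A := by
  by_contra! h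
  let tight : Finset α → Prop := fun T => T ⊆ I ∧ T.Nonempty ∧ f T ≤ T.card
  have hcross : ∀ A B, tight A → tight B → (A ∩ B).Nonempty → tight (A ∪ B) := by
    rintro A B ⟨hA, hA', hA''⟩ ⟨hB, hB', hB''⟩ hne
    refine ⟨Finset.union_subset hA hB, hA'.mono Finset.subset_union_left, ?_⟩
    have h1 := hsub A B hne
    have h2 := hI _ (Finset.inter_subset_left.trans hA) hne
    have h3 := Finset.card_union_add_card_inter A B
    zify at h3
    linarith
  have hmax : ∀ T, tight T → ∃ T', T ⊆ T' ∧ Maximal tight T' := by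
    intro T hT
    classical
    obtain ⟨T', h1, h2⟩ := (I.powerset.filter tight).exists_le_maximal
      (a := T) (by simp [hT, hT.1])
    refine ⟨T', h1, ?_⟩
    have : (fun x => x ∈ I.powerset.filter tight) = tight := by
      funext x
      simp only [Finset.mem_filter, Finset.mem_powerset, eq_iff_iff]
      exact ⟨fun h => h.2, fun h => ⟨h.1, h⟩⟩
    rwa [this] at h2
  have huniq : ∀ A B x, Maximal tight A → Maximal tight B → x ∈ A → x ∈ B → A = B := by
    intro A B x hA hB hxA hxB
    have hu := hcross A B hA.prop hB.prop ⟨x, Finset.mem_inter.2 ⟨hxA, hxB⟩⟩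
    have h1 : A = A ∪ B := hA.eq_of_le hu Finset.subset_union_left
    have h2 : B = A ∪ B := hB.eq_of_le hu Finset.subset_union_right
    exact h1.trans h2.symm
  have h1 : ∀ e ∈ J, e ∉ I → ∃ T, Maximal tight T ∧ f (insert e T) ≤ f T := by
    intro e heJ heI
    obtain ⟨A, hA, hAne, hlt⟩ := h e heJ heI
    have heA : e ∈ A := by
      by_contra hc
      have := hI A ((Finset.subset_insert_iff_of_notMem hc).1 hA) hAne
      linarith
    have hTI : A.erase e ⊆ I := Finset.subset_insert_iff.1 hA
    have hcard : ((A.erase e).card : ℤ) + 1 = A.card := by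
      exact_mod_cast Finset.card_erase_add_one heA
    have hTne : (A.erase e).Nonempty := by
      by_contra hc
      rw [Finset.not_nonempty_iff_eq_empty] at hc
      have hAe : A = {e} := by
        rw [← Finset.insert_erase heA, hc]; rfl
      have := hJ A (by simpa [hAe] using heJ) hAne
      linarith
    have h2 := hI _ hTI hTne
    have h3 := hmono (Finset.erase_subset e A)
    obtain ⟨T', hTT', hT'⟩ := hmax (A.erase e) ⟨hTI, hTne, by linarith⟩
    refine ⟨T', hT', ?_⟩
    have hs : A.erase e ⊆ T' ∩ A := Finset.subset_inter hTT' (Finset.erase_subset e A)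
    have h4 := hsub T' A (hTne.mono hs)
    have h5 := hmono hs
    have h6 : f (insert e T') ≤ f (T' ∪ A) := hmono
      (Finset.insert_subset (Finset.mem_union_right _ heA) Finset.subset_union_left)
    linarith
  have h2 : ∀ x, ∃ T, x ∈ J ∪ I →
      ((Maximal tight T ∧ (x ∈ T ∨ (x ∉ I ∧ f (insert x T) ≤ f T))) ∨
        (x ∈ I ∧ ∀ S, tight S → x ∉ S)) := by
    intro x
    by_cases hxI : x ∈ I
    · by_cases hx : ∃ S, tight S ∧ x ∈ S
      · obtain ⟨S, hS, hxS⟩ := hx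
        obtain ⟨T, hST, hT⟩ := hmax S hS
        exact ⟨T, fun _ => Or.inl ⟨hT, Or.inl (hST hxS)⟩⟩
      · push Not at hx
        exact ⟨{x}, fun _ => Or.inr ⟨hxI, hx⟩⟩
    · by_cases hxJ : x ∈ J
      · obtain ⟨T, hT, hf⟩ := h1 x hxJ hxI
        exact ⟨T, fun _ => Or.inl ⟨hT, Or.inr ⟨hxI, hf⟩⟩⟩
      · exact ⟨∅, fun hx => by simp [hxI, hxJ] at hx⟩
  have h2' : ∀ x, ∃ T, x ∈ J ∪ I →
      ((Maximal tight T ∧ (x ∈ T ∨ (x ∉ I ∧ f (insert x T) ≤ f T))) ∨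
        (x ∈ I ∧ T = {x} ∧ ∀ S, tight S → x ∉ S)) := by
    intro x
    obtain ⟨T, hT⟩ := h2 x
    by_cases hc : x ∈ I ∧ ∀ S, tight S → x ∉ S
    · exact ⟨{x}, fun _ => Or.inr ⟨hc.1, rfl, hc.2⟩⟩
    · exact ⟨T, fun hx => Or.inl ((hT hx).resolve_right hc)⟩
  choose t ht using h2'
  have hfib : ∀ T ∈ (J ∪ I).image t,
      (J.filter (fun x => t x = T)).card ≤ (I.filter (fun x => t x = T)).card := by
    intro T _
    by_cases hT : Maximal tight T
    · have hTI : T ⊆ I.filter (fun x => t x = T) := by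
        intro x hx
        have hxI := hT.prop.1 hx
        refine Finset.mem_filter.2 ⟨hxI, ?_⟩
        rcases ht x (Finset.mem_union_right _ hxI) with ⟨h3, h4 | h4⟩ | h3
        · exact huniq _ _ x h3 hT h4 hx
        · exact absurd hxI h4.1
        · exact absurd hx (h3.2.2 T hT.prop)
      refine le_trans ?_ (Finset.card_le_card hTI)
      rcases (J.filter (fun x => t x = T)).eq_empty_or_nonempty with h0 | hne
      · simp [h0]
      · have h3 := hJ _ (Finset.filter_subset _ _) hne
        have h4 := laman_aux_span f hmono hsub T hT.prop.2.1 (J.filter (fun x => t x = T)) (by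
          intro e he
          obtain ⟨heJ, hte⟩ := Finset.mem_filter.1 he
          rcases ht e (Finset.mem_union_left _ heJ) with ⟨-, h4 | h4⟩ | h3
          · rw [hte] at h4; rw [Finset.insert_eq_of_mem h4]
          · rw [hte] at h4; exact h4.2
          · exfalso
            refine h3.2.2 T hT.prop ?_
            rw [← hte, h3.2.1]; simp)
        have h5 : f (J.filter (fun x => t x = T)) ≤ _ :=
          hmono (Finset.subset_union_right (s₁ := T))
        have h6 := hT.prop.2.2
        zify
        linarith
    · refine Finset.card_le_card ?_
      intro x hx
      obtain ⟨hxJ, htx⟩ := Finset.mem_filter.1 hx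
      rcases ht x (Finset.mem_union_left _ hxJ) with ⟨h3, -⟩ | h3
      · rw [htx] at h3; exact absurd h3 hT
      · exact Finset.mem_filter.2 ⟨h3.1, htx⟩
  have e1 := Finset.card_eq_sum_card_fiberwise (f := t) (s := J) (t := (J ∪ I).image t)
    (fun x hx => Finset.mem_coe.2 (Finset.mem_image_of_mem t (Finset.mem_union_left _ hx)))
  have e2 := Finset.card_eq_sum_card_fiberwise (f := t) (s := I) (t := (J ∪ I).image t)
    (fun x hx => Finset.mem_coe.2 (Finset.mem_image_of_mem t (Finset.mem_union_right _ hx)))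
  have := Finset.sum_le_sum hfib
  omega

theorem laman_aux_rank {α : Type*} (M : Matroid α) (A : Set α) (hA : A.Finite) :
    (M.rankFun A : ℕ∞) = M.eRk A := by
  obtain ⟨I, hI⟩ := M.exists_isBasis' A
  have hIfin : I.Finite := hA.subset hI.subset
  have : M.rankFun A = I.ncard := by
    refine IsGreatest.csSup_eq ⟨⟨I, ⟨hI.indep, hI.subset⟩, rfl⟩, ?_⟩
    rintro _ ⟨K, ⟨hK, hKA⟩, rfl⟩
    have h1 := hK.encard_le_eRk_of_subset hKA
    rw [← hI.encard_eq_eRk, ← hIfin.cast_ncard_eq, ← (hA.subset hKA).cast_ncard_eq] at h1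
    exact_mod_cast h1
  rw [this, hIfin.cast_ncard_eq, hI.encard_eq_eRk]

theorem laman_aux_indep {α : Type*} (M : Matroid α) (d : ℕ) (A : Finset α) :
    M.LamanIndep (d : ℝ) A ↔
      ∀ B ⊆ A, B.Nonempty → (B.card : ℤ) ≤ d * M.rankFun (B : Set α) - 1 := by
  constructor
  · intro h B hB hne
    have := h B (by exact_mod_cast hB) (by exact_mod_cast hne)
    rw [Set.ncard_coe_finset] at this
    have h2 : B.card < d * M.rankFun (B : Set α) := by exact_mod_cast this
    zify at h2
    omega
  · intro h B hB hne
    lift B to Finset α using A.finite_toSet.subset hB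
    have := h B (by exact_mod_cast hB) (by exact_mod_cast hne)
    have h2 : (B.card : ℤ) < d * M.rankFun (B : Set α) := by omega
    rw [Set.ncard_coe_finset]
    exact_mod_cast h2

/-- **Theorem (Laman complex is matroidal for integer `d`).**
Let `d` be a positive integer and `M` a matroid on a finite ground set `E`.
Then there is a matroid on the same ground set whose independent sets are
exactly the `d`-Laman independent subsets of `E`. -/
theorem lamanComplex_matroidal {α : Type*} (M : Matroid α) (hfin : M.E.Finite)
    (d : ℕ) (hd : 0 < d) :
    ∃ N : Matroid α, N.E = M.E ∧
      ∀ A ⊆ M.E, (N.Indep A ↔ M.LamanIndep (d : ℝ) A) := by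
  classical
  let f : Finset α → ℤ := fun B => d * M.rankFun (B : Set α) - 1
  have hmono : Monotone f := by
    intro A B hAB
    have h1 := M.eRk_mono (show (A : Set α) ≤ (B : Set α) by exact_mod_cast hAB)
    rw [← laman_aux_rank M _ A.finite_toSet, ← laman_aux_rank M _ B.finite_toSet] at h1
    have h2 : M.rankFun (A : Set α) ≤ M.rankFun (B : Set α) := by exact_mod_cast h1
    have h3 := Nat.mul_le_mul_left d h2
    zify at h3
    simp only [f]
    linarith
  have hsub : ∀ A B : Finset α, (A ∩ B).Nonempty → f (A ∪ B) + f (A ∩ B) ≤ f A + f B := by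
    intro A B _
    have h1 := M.eRk_inter_add_eRk_union_le (A : Set α) (B : Set α)
    rw [← Finset.coe_inter, ← Finset.coe_union, ← laman_aux_rank M _ A.finite_toSet,
      ← laman_aux_rank M _ B.finite_toSet, ← laman_aux_rank M _ (A ∩ B).finite_toSet,
      ← laman_aux_rank M _ (A ∪ B).finite_toSet] at h1
    have h2 : M.rankFun ((A ∩ B : Finset α) : Set α) + M.rankFun ((A ∪ B : Finset α) : Set α)
        ≤ M.rankFun (A : Set α) + M.rankFun (B : Set α) := by exact_mod_cast h1
    have h3 := Nat.mul_le_mul_left d h2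
    zify at h3
    simp only [f, Finset.coe_inter, Finset.coe_union]
    linarith
  refine ⟨(IndepMatroid.ofFinset M.E
    (fun A => (A : Set α) ⊆ M.E ∧ ∀ B ⊆ A, B.Nonempty → (B.card : ℤ) ≤ f B)
    ?_ ?_ ?_ ?_).matroid, rfl, ?_⟩
  · refine ⟨by simp, fun B hB hne => ?_⟩
    rw [Finset.subset_empty.1 hB] at hne
    exact absurd hne Finset.not_nonempty_empty
  · intro I J hJ hIJ
    exact ⟨(Finset.coe_subset.2 hIJ).trans hJ.1, fun B hB => hJ.2 B (hB.trans hIJ)⟩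
  · intro I J hI hJ hlt
    obtain ⟨e, heJ, heI, he⟩ := laman_aux_aug f hmono hsub I J hI.2 hJ.2 hlt
    refine ⟨e, heJ, heI, ?_, he⟩
    rw [Finset.coe_insert]
    exact Set.insert_subset (hJ.1 heJ) hI.1
  · intro I hI
    exact hI.1
  · intro A hA
    lift A to Finset α using hfin.subset hA
    rw [laman_aux_indep, IndepMatroid.matroid_indep_iff, IndepMatroid.ofFinset_indep]
    exact ⟨fun h => h.2, fun h => ⟨hA, h⟩⟩
end

section
/- Let m > 1 be a real number that is not an integer. Then there exist a positive integer r, a finite index set E, and vectors (v_e)_{e ∈ E} in ℚ^r such that, for the linear matroid M on E represented by these vectors (whose rank function is r(A) = dim_ℚ span{v_e : e ∈ A}), the collection of m-Laman independent subsets of E is NOT the collection of independent sets of any matroid on E. -/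
/-- The rank function of the linear matroid represented by vectors
`v : E → (Fin r → ℚ)`: the dimension of the span of `{v e : e ∈ A}`. -/
noncomputable def linRank {E : Type*} {r : ℕ} (v : E → (Fin r → ℚ)) (A : Set E) : ℕ :=
  Module.finrank ℚ (Submodule.span ℚ (v '' A))

/-- `A` is `m`-Laman independent for the linear matroid represented by `v` if
`m * r(A') > |A'|` for every nonempty `A' ⊆ A`. -/
def LinLamanIndep {E : Type*} {r : ℕ} (v : E → (Fin r → ℚ)) (m : ℝ) (A : Set E) : Prop :=
  ∀ A' ⊆ A, A'.Nonempty → (A'.ncard : ℝ) < m * (linRank v A' : ℝ)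

/-- Arithmetic input: consecutive increments `k`, then `k+1`, of `⌈m r⌉`. -/
lemma laman_arith (m : ℝ) (hm : 1 < m) (hni : ∀ z : ℤ, (z : ℝ) ≠ m) :
    ∃ p c k : ℕ, 1 ≤ c ∧ (c : ℝ) < m * p ∧ (c : ℝ) + k < m * (p + 1) ∧
      m * (p + 1) ≤ (c : ℝ) + k + 1 ∧ (c : ℝ) + 2 * k + 1 < m * (p + 2) := by
  set k : ℤ := ⌊m⌋ with hk
  have hk1 : (k : ℝ) < m := lt_of_le_of_ne (Int.floor_le m) (hni k)
  have hk2 : m < k + 1 := Int.lt_floor_add_one m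
  have hk0 : 1 ≤ k := Int.le_floor.2 (by exact_mod_cast hm.le)
  obtain ⟨p, hp1, hpa, hpb⟩ : ∃ p : ℕ, 1 ≤ p ∧ ⌈m * ((p + 1 : ℕ) : ℝ)⌉ ≤ ⌈m * (p : ℝ)⌉ + k ∧
      ⌈m * ((p + 1 : ℕ) : ℝ)⌉ + k + 1 ≤ ⌈m * ((p + 2 : ℕ) : ℝ)⌉ := by
    by_contra hcon
    push Not at hcon
    obtain ⟨q, hq1, hq⟩ : ∃ q : ℕ, 1 ≤ q ∧
        ⌈m * ((q + 1 : ℕ) : ℝ)⌉ ≤ ⌈m * (q : ℝ)⌉ + k := by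
      by_contra hc
      push Not at hc
      have key : ∀ j : ℕ, ⌈m * ((1 : ℕ) : ℝ)⌉ + j * (k + 1) ≤ ⌈m * ((1 + j : ℕ) : ℝ)⌉ := by
        intro j
        induction j with
        | zero => simp
        | succ j ih =>
          have := hc (1 + j) (by omega)
          rw [← add_assoc]
          push_cast at *
          linarith
      obtain ⟨j, hj⟩ := exists_nat_gt (1 / (k + 1 - m))
      rw [div_lt_iff₀ (by linarith)] at hj
      have h1 := key j
      have h2 := Int.ceil_lt_add_one (m * ((1 + j : ℕ) : ℝ))
      have h3 := Int.le_ceil (m * ((1 : ℕ) : ℝ))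
      have h4 : ((⌈m * ((1 : ℕ) : ℝ)⌉ + j * (k + 1) : ℤ) : ℝ) ≤ ⌈m * ((1 + j : ℕ) : ℝ)⌉ := by
        exact_mod_cast h1
      push_cast at h2 h3 h4
      nlinarith
    have key : ∀ j : ℕ, ⌈m * ((q + j + 1 : ℕ) : ℝ)⌉ ≤ ⌈m * ((q + j : ℕ) : ℝ)⌉ + k := by
      intro j
      induction j with
      | zero => simpa using hq
      | succ j ih =>
        have := hcon (q + j) (by omega) ih
        have e : q + (j + 1) + 1 = q + j + 2 := by ring
        have e' : q + (j + 1) = q + j + 1 := by ring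
        rw [e, e']
        omega
    have key2 : ∀ j : ℕ, ⌈m * ((q + j : ℕ) : ℝ)⌉ ≤ ⌈m * (q : ℝ)⌉ + j * k := by
      intro j
      induction j with
      | zero => simp
      | succ j ih =>
        have := key j
        rw [← add_assoc]
        push_cast at *
        linarith
    obtain ⟨j, hj⟩ := exists_nat_gt (1 / (m - k))
    rw [div_lt_iff₀ (by linarith)] at hj
    have h1 := key2 j
    have h2 := Int.ceil_lt_add_one (m * (q : ℝ))
    have h3 := Int.le_ceil (m * ((q + j : ℕ) : ℝ))
    have h4 : ((⌈m * ((q + j : ℕ) : ℝ)⌉ : ℤ) : ℝ) ≤ ((⌈m * (q : ℝ)⌉ + j * k : ℤ) : ℝ) := by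
      exact_mod_cast h1
    push_cast at h2 h3 h4
    nlinarith
  have hp1' : (1 : ℝ) ≤ p := by exact_mod_cast hp1
  have hu2 : 2 ≤ ⌈m * (p : ℝ)⌉ := by
    have : (1 : ℤ) < ⌈m * (p : ℝ)⌉ := Int.lt_ceil.2 (by push_cast; nlinarith)
    omega
  obtain ⟨c, hc⟩ := Int.eq_ofNat_of_zero_le (show 0 ≤ ⌈m * (p : ℝ)⌉ - 1 by omega)
  obtain ⟨K, hK⟩ := Int.eq_ofNat_of_zero_le (show 0 ≤ k by omega)
  have hKr : (k : ℝ) = K := by rw [hK]; simp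
  have hcr : ((⌈m * (p : ℝ)⌉ : ℤ) : ℝ) = c + 1 := by
    have : ⌈m * (p : ℝ)⌉ = c + 1 := by omega
    rw [this]; push_cast; ring
  have a1 := Int.ceil_lt_add_one (m * (p : ℝ))
  have a2 : ((⌈m * ((p + 1 : ℕ) : ℝ)⌉ : ℤ) : ℝ) ≤ ⌈m * (p : ℝ)⌉ + k := by exact_mod_cast hpa
  have a3 : ((⌈m * ((p + 1 : ℕ) : ℝ)⌉ : ℤ) : ℝ) + k + 1 ≤ ⌈m * ((p + 2 : ℕ) : ℝ)⌉ := by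
    exact_mod_cast hpb
  have a4 := Int.le_ceil (m * ((p + 1 : ℕ) : ℝ))
  have a5 := Int.ceil_lt_add_one (m * ((p + 2 : ℕ) : ℝ))
  have a6 : ⌈m * (p : ℝ)⌉ + k ≤ ⌈m * ((p + 1 : ℕ) : ℝ)⌉ := by
    rw [← Int.ceil_add_intCast]
    apply Int.ceil_le_ceil
    push_cast
    linarith
  have a7 : ((⌈m * (p : ℝ)⌉ : ℤ) : ℝ) + k ≤ ⌈m * ((p + 1 : ℕ) : ℝ)⌉ := by exact_mod_cast a6
  push_cast at *
  refine ⟨p, c, K, by omega, ?_, ?_, ?_, ?_⟩ <;> linarith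

/-- Generic choice of vectors in prescribed subspaces. -/
lemma laman_generic {V : Type*} [AddCommGroup V] [Module ℚ V] (W : ℕ → Submodule ℚ V)
    (F : Submodule ℚ V) (n : ℕ) :
    ∃ v : ℕ → V, ∀ i < n, v i ∈ W i ∧ (v i ∈ F → W i ≤ F) ∧
      ∀ I : Finset ℕ, I ⊆ Finset.range i →
        v i ∈ Submodule.span ℚ (v '' I) → W i ≤ Submodule.span ℚ (v '' I) := by
  classical
  induction n with
  | zero => exact ⟨0, by simp⟩
  | succ n ih =>
    obtain ⟨v, hv⟩ := ih
    let S : Finset (Submodule ℚ V) :=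
      insert F ((Finset.range n).powerset.image fun I => Submodule.span ℚ (v '' (I : Set ℕ)))
    let S' : Finset (Submodule ℚ (W n)) :=
      (S.image fun U => U.comap (W n).subtype).filter (· ≠ ⊤)
    have hne := Subspace.biUnion_ne_univ_of_top_notMem (k := ℚ) (s := S') (by simp [S'])
    obtain ⟨w, hw⟩ := (Set.ne_univ_iff_exists_notMem _).1 hne
    have hwS : ∀ U ∈ S, (w : V) ∈ U → W n ≤ U := by
      intro U hU hwU
      by_contra hle
      apply hw
      simp only [Set.mem_iUnion]
      refine ⟨U.comap (W n).subtype, ?_, hwU⟩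
      simp only [S', Finset.mem_filter, Finset.mem_image]
      refine ⟨⟨U, hU, rfl⟩, ?_⟩
      rwa [Ne, Submodule.comap_subtype_eq_top]
    refine ⟨Function.update v n w, fun i hi => ?_⟩
    have himg : ∀ I : Finset ℕ, I ⊆ Finset.range i →
        Function.update v n (w : V) '' I = v '' (I : Set ℕ) := by
      intro I hI
      apply Set.image_congr
      intro a ha
      have := Finset.mem_range.1 (hI ha)
      rw [Function.update_of_ne (by omega)]
    rcases Nat.lt_succ_iff_lt_or_eq.1 hi with h | rfl
    · rw [Function.update_of_ne (by omega)]
      refine ⟨(hv i h).1, (hv i h).2.1, fun I hI => ?_⟩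
      rw [himg I hI]
      exact (hv i h).2.2 I hI
    · rw [Function.update_self]
      refine ⟨w.2, hwS F (by simp [S]), fun I hI => ?_⟩
      rw [himg I hI]
      exact hwS _ (Finset.mem_insert_of_mem (Finset.mem_image_of_mem _ (by simpa using hI)))

lemma laman_step {r : ℕ} (v : ℕ → (Fin r → ℚ)) (m : ℝ) (hm : 1 < m) (J : Finset ℕ) (e : ℕ)
    (he : e ∉ J) (W : Submodule ℚ (Fin r → ℚ))
    (hgen : ∀ I : Finset ℕ, I ⊆ J → v e ∈ Submodule.span ℚ (v '' I) →
      W ≤ Submodule.span ℚ (v '' I))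
    (hb : ∀ I : Finset ℕ, I ⊆ J → W ≤ Submodule.span ℚ (v '' I) →
      (I.card : ℝ) + 1 < m * linRank v I)
    (hJ : LinLamanIndep v m (J : Set ℕ)) :
    LinLamanIndep v m ((insert e J : Finset ℕ) : Set ℕ) := by
  intro A hA hAne
  have hfin : A.Finite := (Finset.finite_toSet _).subset hA
  by_cases heA : e ∈ A
  · lift A to Finset ℕ using hfin
    have hI : A.erase e ⊆ J := by
      intro x hx
      have := hA (Finset.mem_of_mem_erase hx)
      simp at this hx
      tauto
    set I := A.erase e with hIdef
    have hAI : A = insert e I := (Finset.insert_erase heA).symm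
    have heI : e ∉ I := fun h => he (hI h)
    have hcard : (Set.ncard (A : Set ℕ) : ℝ) = I.card + 1 := by
      rw [Set.ncard_coe_finset, hAI, Finset.card_insert_of_notMem heI]; push_cast; rfl
    have hmono : linRank v I ≤ linRank v A := by
      apply Submodule.finrank_mono
      exact Submodule.span_mono (Set.image_mono (by simp [hAI]))
    rw [hcard]
    by_cases hs : v e ∈ Submodule.span ℚ (v '' I)
    · have := hb I hI (hgen I hI hs)
      have h2 : (linRank v I : ℝ) ≤ linRank v A := by exact_mod_cast hmono
      nlinarith
    · have hlt : linRank v I < linRank v A := by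
        apply Submodule.finrank_lt_finrank_of_lt
        refine lt_of_le_of_ne (Submodule.span_mono (Set.image_mono (by simp [hAI]))) ?_
        intro h
        apply hs
        rw [h]
        exact Submodule.subset_span ⟨e, heA, rfl⟩
      have h2 : (linRank v I : ℝ) + 1 ≤ linRank v A := by exact_mod_cast hlt
      have h3 : (I.card : ℝ) ≤ m * linRank v I := by
        rcases I.eq_empty_or_nonempty with h | h
        · rw [h]; simp only [Finset.card_empty, Nat.cast_zero]; positivity
        · have := hJ I (by exact_mod_cast hI) (by exact_mod_cast h)
          rw [Set.ncard_coe_finset] at this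
          exact this.le
      nlinarith
  · apply hJ A _ hAne
    intro x hx
    have := hA hx
    simp at this
    rcases this with rfl | h
    · exact absurd hx heA
    · exact h

lemma laman_mono {E : Type*} {r : ℕ} {v : E → (Fin r → ℚ)} {m : ℝ} {A B : Set E}
    (h : LinLamanIndep v m B) (hAB : A ⊆ B) : LinLamanIndep v m A :=
  fun A' hA' hne => h A' (hA'.trans hAB) hne

lemma laman_core (m : ℝ) (hm : 1 < m) (p c k : ℕ) (hc : 1 ≤ c)
    (h1 : (c : ℝ) < m * p) (h2 : (c : ℝ) + k < m * (p + 1))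
    (h4 : (c : ℝ) + 2 * k + 1 < m * (p + 2)) :
    ∃ v : ℕ → (Fin (p + 2) → ℚ),
      LinLamanIndep v m (Finset.range c : Finset ℕ) ∧
      LinLamanIndep v m ((Finset.range (c + 2 * k + 2)).erase (c - 1) : Finset ℕ) ∧
      linRank v (Finset.range (c + k + 1) : Finset ℕ) ≤ p + 1 ∧
      linRank v (Finset.range c ∪ Finset.Ico (c + k + 1) (c + 2 * k + 2) : Finset ℕ) ≤ p + 1 := by
  have hker : ∀ j : Fin (p + 2), Module.finrank ℚ
      (LinearMap.ker (LinearMap.proj j : (Fin (p + 2) → ℚ) →ₗ[ℚ] ℚ)) = p + 1 := by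
    intro j
    have h := LinearMap.finrank_range_add_finrank_ker
      (LinearMap.proj j : (Fin (p + 2) → ℚ) →ₗ[ℚ] ℚ)
    have hr : LinearMap.range (LinearMap.proj j : (Fin (p + 2) → ℚ) →ₗ[ℚ] ℚ) = ⊤ :=
      LinearMap.range_eq_top.2 (LinearMap.proj_surjective j)
    rw [hr, finrank_top] at h
    simp at h
    omega
  obtain ⟨WA, WB, hA, hB, hF, hAF⟩ : ∃ WA WB : Submodule ℚ (Fin (p + 2) → ℚ),
      Module.finrank ℚ WA = p + 1 ∧ Module.finrank ℚ WB = p + 1 ∧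
      p ≤ Module.finrank ℚ (WA ⊓ WB : Submodule ℚ (Fin (p + 2) → ℚ)) ∧ ¬ WA ≤ WA ⊓ WB := by
    refine ⟨LinearMap.ker (LinearMap.proj 0), LinearMap.ker (LinearMap.proj 1),
      hker 0, hker 1, ?_, ?_⟩
    · have h := Submodule.finrank_sup_add_finrank_inf_eq
        (LinearMap.ker (LinearMap.proj 0 : (Fin (p + 2) → ℚ) →ₗ[ℚ] ℚ))
        (LinearMap.ker (LinearMap.proj 1 : (Fin (p + 2) → ℚ) →ₗ[ℚ] ℚ))
      have h' := Submodule.finrank_le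
        (LinearMap.ker (LinearMap.proj 0 : (Fin (p + 2) → ℚ) →ₗ[ℚ] ℚ) ⊔
        LinearMap.ker (LinearMap.proj 1 : (Fin (p + 2) → ℚ) →ₗ[ℚ] ℚ))
      rw [hker, hker] at h
      simp only [Module.finrank_fin_fun] at h'
      omega
    · intro h
      have := (h (show Pi.single (1 : Fin (p + 2)) (1 : ℚ) ∈ _ by simp)).2
      simp at this
  set F := WA ⊓ WB with hFdef
  obtain ⟨v, hv⟩ := laman_generic
    (fun i => if i < c then F else if i < c + k + 1 then WA else WB) F (c + 2 * k + 2)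
  have hgenT : ∀ i < c, v i ∈ F ∧ ∀ I : Finset ℕ, I ⊆ Finset.range i →
      v i ∈ Submodule.span ℚ (v '' I) → F ≤ Submodule.span ℚ (v '' I) := by
    intro i hi
    have h := hv i (by omega)
    simp only [hi, if_true] at h
    exact ⟨h.1, h.2.2⟩
  have hgenA : ∀ i, c ≤ i → i < c + k + 1 → v i ∈ WA ∧ v i ∉ F ∧
      ∀ I : Finset ℕ, I ⊆ Finset.range i →
      v i ∈ Submodule.span ℚ (v '' I) → WA ≤ Submodule.span ℚ (v '' I) := by
    intro i hi hi'
    have h := hv i (by omega)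
    simp only [not_lt.2 hi, hi', if_true, if_false] at h
    exact ⟨h.1, fun hh => hAF (h.2.1 hh), h.2.2⟩
  have hgenB : ∀ i, c + k + 1 ≤ i → i < c + 2 * k + 2 → v i ∈ WB ∧
      ∀ I : Finset ℕ, I ⊆ Finset.range i →
      v i ∈ Submodule.span ℚ (v '' I) → WB ≤ Submodule.span ℚ (v '' I) := by
    intro i hi hi'
    have h := hv i (by omega)
    simp only [not_lt.2 hi, not_lt.2 (show c ≤ i by omega), if_false] at h
    exact ⟨h.1, h.2.2⟩
  clear hv
  have bound : ∀ (I : Finset ℕ) (a d : ℕ), I.card + 1 ≤ a → d ≤ linRank v I →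
      (a : ℝ) < m * d → (I.card : ℝ) + 1 < m * linRank v I := by
    intro I a d h1 h2 h3
    have h1' : (I.card : ℝ) + 1 ≤ a := by exact_mod_cast h1
    have h2' : (d : ℝ) ≤ linRank v I := by exact_mod_cast h2
    nlinarith
  have phaseT : ∀ j ≤ c, LinLamanIndep v m (Finset.range j : Finset ℕ) := by
    intro j
    induction j with
    | zero =>
      intro _ A hA hne
      simp at hA
      simp [hA] at hne
    | succ j ih =>
      intro hj
      rw [Finset.range_add_one]
      refine laman_step v m hm _ _ (by simp) F (hgenT j (by omega)).2 ?_ (ih (by omega))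
      intro I hI hW
      have hcard := Finset.card_le_card hI
      rw [Finset.card_range] at hcard
      exact bound I c p (by omega) (hF.trans (Submodule.finrank_mono hW)) h1
  have hins : ∀ j, c ≤ j → (Finset.range (j + 1)).erase (c - 1) =
      insert j ((Finset.range j).erase (c - 1)) := by
    intro j hj
    ext x
    simp
    omega
  have hcardE : ∀ j, c ≤ j → ((Finset.range j).erase (c - 1)).card = j - 1 := by
    intro j hj
    rw [Finset.card_erase_of_mem (by simp; omega), Finset.card_range]
  have phaseA : ∀ j, c ≤ j → j ≤ c + k + 1 →
      LinLamanIndep v m ((Finset.range j).erase (c - 1) : Finset ℕ) := by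
    intro j hj
    induction j, hj using Nat.le_induction with
    | base =>
      intro _
      exact laman_mono (phaseT c le_rfl) (by exact_mod_cast Finset.erase_subset _ _)
    | succ j hj ih =>
      intro hj'
      rw [hins j hj]
      refine laman_step v m hm _ _ (by simp) WA
        (fun I hI => (hgenA j hj (by omega)).2.2 I (hI.trans (Finset.erase_subset _ _))) ?_
        (ih (by omega))
      intro I hI hW
      have hcard := Finset.card_le_card hI
      rw [hcardE j hj] at hcard
      exact bound I (c + k) (p + 1) (by omega) (hA.symm.le.trans (Submodule.finrank_mono hW))
        (by push_cast; linarith)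
  have phaseB : ∀ j, c + k + 1 ≤ j → j ≤ c + 2 * k + 2 →
      LinLamanIndep v m ((Finset.range j).erase (c - 1) : Finset ℕ) := by
    intro j hj
    induction j, hj using Nat.le_induction with
    | base => intro _; exact phaseA _ (by omega) le_rfl
    | succ j hj ih =>
      intro hj'
      rw [hins j (by omega)]
      refine laman_step v m hm _ _ (by simp) WB
        (fun I hI => (hgenB j hj (by omega)).2 I (hI.trans (Finset.erase_subset _ _))) ?_
        (ih (by omega))
      intro I hI hW
      by_cases hex : ∃ i ∈ I, c ≤ i ∧ i < c + k + 1
      · obtain ⟨i, hiI, hi1, hi2⟩ := hex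
        have hcard := Finset.card_le_card hI
        rw [hcardE j (by omega)] at hcard
        have hlt : WB < Submodule.span ℚ (v '' I) := by
          refine lt_of_le_of_ne hW ?_
          intro h
          have hvi : v i ∈ WB := by
            rw [h]
            exact Submodule.subset_span ⟨i, hiI, rfl⟩
          exact (hgenA i hi1 hi2).2.1 ⟨(hgenA i hi1 hi2).1, hvi⟩
        have := Submodule.finrank_lt_finrank_of_lt hlt
        refine bound I (c + 2 * k + 1) (p + 2) (by omega) ?_ (by push_cast; linarith)
        unfold linRank
        omega
      · push Not at hex
        have hsub : I ⊆ Finset.range (c - 1) ∪ Finset.Ico (c + k + 1) j := by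
          intro x hx
          have h1 := hI hx
          have h2 := hex x hx
          simp at h1 ⊢
          omega
        have hcard := (Finset.card_le_card hsub).trans (Finset.card_union_le _ _)
        simp only [Finset.card_range, Nat.card_Ico] at hcard
        exact bound I (c + k) (p + 1) (by omega) (hB.symm.le.trans (Submodule.finrank_mono hW))
          (by push_cast; linarith)
  refine ⟨v, phaseT c le_rfl, phaseB _ (by omega) le_rfl, ?_, ?_⟩
  · rw [← hA]
    apply Submodule.finrank_mono
    rw [Submodule.span_le]
    rintro _ ⟨i, hi, rfl⟩
    simp at hi
    by_cases hic : i < c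
    · exact (hgenT i hic).1.1
    · exact (hgenA i (by omega) (by omega)).1
  · rw [← hB]
    apply Submodule.finrank_mono
    rw [Submodule.span_le]
    rintro _ ⟨i, hi, rfl⟩
    simp at hi
    by_cases hic : i < c
    · exact (hgenT i hic).1.2
    · exact (hgenB i (by omega) (by omega)).1

/-- **Theorem (for non-integral `m` the Laman complex need not be matroidal).**
If `m > 1` is a real number that is not an integer, then there are a positive
integer `r`, a finite index set `E = Fin n`, and vectors `v : Fin n → ℚ^r`
such that the `m`-Laman independent subsets of `E` for the matroid represented
by `v` are not the independent sets of any matroid on `E`. -/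
theorem laman_not_matroidal_of_not_int (m : ℝ) (hm : 1 < m)
    (hni : ∀ z : ℤ, (z : ℝ) ≠ m) :
    ∃ (r n : ℕ) (v : Fin n → (Fin r → ℚ)), 0 < r ∧
      ¬ ∃ N : Matroid (Fin n), N.E = Set.univ ∧
          ∀ A : Set (Fin n), (N.Indep A ↔ LinLamanIndep v m A) := by
  obtain ⟨p, c, k, hc, h1, h2, h3, h4⟩ := laman_arith m hm hni
  obtain ⟨v, hT, hS, hX, hY⟩ := laman_core m hm p c k hc h1 h2 h4
  refine ⟨p + 2, c + 2 * k + 2, fun i => v i, by omega, ?_⟩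
  rintro ⟨N, hE, hN⟩
  have hrank : ∀ A : Set (Fin (c + 2 * k + 2)),
      linRank (fun i : Fin (c + 2 * k + 2) => v i) A = linRank v (Fin.val '' A) := by
    intro A
    unfold linRank
    rw [Set.image_image]
  have hcardv : ∀ A : Set (Fin (c + 2 * k + 2)), (Fin.val '' A).ncard = A.ncard :=
    fun A => Set.ncard_image_of_injective A Fin.val_injective
  have hind : ∀ J : Finset ℕ, J ⊆ Finset.range (c + 2 * k + 2) → LinLamanIndep v m (J : Set ℕ) →
      (J.card : ℕ∞) ≤ N.eRk (Fin.val ⁻¹' (J : Set ℕ)) := by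
    intro J hJ hI
    have hi : N.Indep (Fin.val ⁻¹' (J : Set ℕ)) := by
      rw [hN]
      intro A hA hne
      rw [hrank, ← hcardv]
      exact hI _ (Set.image_subset_iff.2 hA) (hne.image _)
    rw [hi.eRk_eq_encard, ← Fin.val_injective.encard_image, Set.image_preimage_eq_of_subset,
      Set.encard_coe_eq_coe_finsetCard]
    intro x hx
    exact ⟨⟨x, Finset.mem_range.1 (hJ hx)⟩, rfl⟩
  have hup : ∀ J : Finset ℕ, linRank v (J : Set ℕ) ≤ p + 1 →
      N.eRk (Fin.val ⁻¹' (J : Set ℕ)) ≤ ((c + k : ℕ) : ℕ∞) := by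
    intro J hJ
    rw [Matroid.eRk_le_iff]
    intro I hI hIi
    rcases I.eq_empty_or_nonempty with rfl | hne
    · simp
    have h := (hN I).1 hIi I subset_rfl hne
    rw [hrank] at h
    have hle : linRank v (Fin.val '' I) ≤ p + 1 :=
      le_trans (Submodule.finrank_mono (Submodule.span_mono
        (Set.image_mono (Set.image_subset_iff.2 hI)))) hJ
    have hle' : (linRank v (Fin.val '' I) : ℝ) ≤ p + 1 := by exact_mod_cast hle
    have h5 : (I.ncard : ℝ) < ((c + k + 1 : ℕ) : ℝ) := by
      push_cast
      nlinarith
    have h6 : I.ncard < c + k + 1 := by exact_mod_cast h5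
    rw [← (Set.toFinite I).cast_ncard_eq]
    exact_mod_cast Nat.lt_succ_iff.1 h6
  have hsub := N.eRk_submod
    (Fin.val ⁻¹' ((Finset.range (c + k + 1) : Finset ℕ) : Set ℕ))
    (Fin.val ⁻¹' ((Finset.range c ∪ Finset.Ico (c + k + 1) (c + 2 * k + 2) : Finset ℕ) : Set ℕ))
  have l1 := (hind _ (Finset.range_subset_range.2 (by omega)) hT).trans (N.eRk_mono (show _ ⊆
    (Fin.val ⁻¹' ((Finset.range (c + k + 1) : Finset ℕ) : Set ℕ)) ∩
    (Fin.val ⁻¹' ((Finset.range c ∪ Finset.Ico (c + k + 1) (c + 2 * k + 2) : Finset ℕ) : Set ℕ))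
    from by intro x hx; simp at hx ⊢; omega))
  have l2 := (hind _ (Finset.erase_subset _ _) hS).trans (N.eRk_mono (show _ ⊆
    (Fin.val ⁻¹' ((Finset.range (c + k + 1) : Finset ℕ) : Set ℕ)) ∪
    (Fin.val ⁻¹' ((Finset.range c ∪ Finset.Ico (c + k + 1) (c + 2 * k + 2) : Finset ℕ) : Set ℕ))
    from by intro x hx; simp at hx ⊢; omega))
  have hfin := ((add_le_add l1 l2).trans hsub).trans (add_le_add (hup _ hX) (hup _ hY))
  rw [Finset.card_erase_of_mem (by simp; omega), Finset.card_range, Finset.card_range] at hfin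
  have : c + (c + 2 * k + 2 - 1) ≤ (c + k) + (c + k) := by exact_mod_cast hfin
  omega
end

section
/- Let m > 1 be a real number which is not an integer, and let c = ⌊m⌋ be the greatest integer ≤ m. Then there exist positive integers a and b such that (a − 1)/b < (2a − c − 1)/(2b − 1) < m ≤ a/b. -/
/-- **Numerical lemma (interval exhaustion).**
Let `m > 1` be a real number which is not an integer and let `c = ⌊m⌋`.
Then there exist positive integers `a, b` with
`(a − 1)/b < (2a − c − 1)/(2b − 1) < m ≤ a/b`. -/
theorem interval_exhaustion (m : ℝ) (hm : 1 < m) (hni : ∀ z : ℤ, (z : ℝ) ≠ m) :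
    ∃ a b : ℕ, 0 < a ∧ 0 < b ∧
      ((a : ℝ) - 1) / (b : ℝ) < (2 * (a : ℝ) - (⌊m⌋ : ℝ) - 1) / (2 * (b : ℝ) - 1) ∧
      (2 * (a : ℝ) - (⌊m⌋ : ℝ) - 1) / (2 * (b : ℝ) - 1) < m ∧
      m ≤ (a : ℝ) / (b : ℝ) := by
  have h1 : (⌊m⌋ : ℝ) < m := lt_of_le_of_ne (Int.floor_le m) (hni _)
  have h2 : m < ⌊m⌋ + 1 := Int.lt_floor_add_one m
  have h0 : 0 ≤ ⌊m⌋ := Int.floor_nonneg.mpr (by linarith)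
  obtain ⟨C, hC⟩ := Int.eq_ofNat_of_zero_le h0
  rw [hC] at h1 h2 ⊢
  simp only [Int.cast_natCast] at h1 h2 ⊢
  obtain ⟨e, he⟩ : ∃ e : ℝ, e = C + 1 - m := ⟨_, rfl⟩
  have he0 : 0 < e := by linarith
  have he1 : e < 1 := by linarith
  obtain ⟨p, hp1, hp2⟩ : ∃ p : ℕ, e * (p + 1) < 1 ∧ 1 ≤ e * (p + 2) := by
    have hc : 1 < ⌈1 / e⌉₊ := by
      rw [Nat.lt_ceil, Nat.cast_one, lt_div_iff₀ he0]; linarith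
    obtain ⟨p, hp⟩ := Nat.exists_eq_add_of_le' (show 2 ≤ ⌈1 / e⌉₊ from hc)
    refine ⟨p, ?_, ?_⟩
    · have : p + 1 < ⌈1 / e⌉₊ := by omega
      rw [Nat.lt_ceil, lt_div_iff₀ he0] at this
      push_cast at this; linarith
    · have := Nat.le_ceil (1 / e)
      rw [hp, div_le_iff₀ he0] at this
      push_cast at this; linarith
  obtain ⟨d, hd⟩ : ∃ d : ℝ, d = 1 - e * (p + 1) := ⟨_, rfl⟩
  have hd0 : 0 < d := by linarith
  have hde : d ≤ e := by linarith
  obtain ⟨k, hk1, hk2, hk3⟩ : ∃ k : ℕ, 1 ≤ k ∧ k * d ≤ e ∧ e < (k + 1) * d := by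
    refine ⟨⌊e / d⌋₊, ?_, ?_, ?_⟩
    · rw [Nat.one_le_floor_iff, le_div_iff₀ hd0]; linarith
    · exact (le_div_iff₀ hd0).mp (Nat.floor_le (by positivity))
    · exact (div_lt_iff₀ hd0).mp (Nat.lt_floor_add_one _)
  have hk1' : (1 : ℝ) ≤ k := by exact_mod_cast hk1
  have hkd : d ≤ k * d := by nlinarith
  have hmain : e - k * d < e / 2 := by
    rcases le_or_gt d (e / 2) with h | h <;> linarith
  have hkp : (0 : ℝ) ≤ k * p := by positivity
  have hC0 : (0 : ℝ) ≤ C := by positivity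
  have hmm : m = C + 1 - e := by linarith
  have hb : (0 : ℝ) < 1 + k * (p + 1) := by positivity
  have hb2 : (0 : ℝ) < 2 * (1 + k * (p + 1)) - 1 := by linarith
  refine ⟨C * (1 + k * (p + 1)) + (1 + k * p), 1 + k * (p + 1), by omega, by omega, ?_, ?_, ?_⟩
  · push_cast
    rw [div_lt_div_iff₀ hb hb2]
    nlinarith
  · push_cast
    rw [div_lt_iff₀ hb2, hmm]
    rw [hd] at hmain
    nlinarith
  · push_cast
    rw [le_div_iff₀ hb, hmm]
    rw [hd] at hk2
    nlinarith
end

section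
/- Let M be a matroid on a finite ground set E with rank function r, and fix a real number m > 1. For real q > 1 define T(q) = Σ_{A ⊆ E} (q^{m−1} − 1)^{r(E) − r(A)} · (q − 1)^{|A| − r(A)}, where real powers q^{m−1} are defined via the real exponential. Then the full ground set E is m-Laman independent if and only if T(q)/q^{(m−1)·r(E)} tends to 1 as q → ∞ (i.e., the 'generalized polynomial' T_M(q^{m−1}, q) is monic of degree (m−1)·r(M)). -/
open Filter

/-- The corank-nullity evaluation
`T(q) = T_M(q^{m-1}, q) = Σ_{A ⊆ E} (q^{m-1} - 1)^{r(E) - r(A)} (q - 1)^{|A| - r(A)}`,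
where `q^{m-1}` is a real power. -/
noncomputable def tutteEval {α : Type*} [Fintype α] (M : Matroid α) (m q : ℝ) : ℝ :=
  ∑ A : Finset α,
    (q ^ (m - 1) - 1) ^ (M.rankFun Set.univ - M.rankFun (A : Set α)) *
      (q - 1) ^ (A.card - M.rankFun (A : Set α))

namespace LamanAux

theorem bdd {α : Type*} [Fintype α] (M : Matroid α) (A : Set α) :
    BddAbove (Set.ncard '' {I : Set α | M.Indep I ∧ I ⊆ A}) :=
  (Set.toFinite _).bddAbove

theorem nonempty {α : Type*} (M : Matroid α) (A : Set α) :
    (Set.ncard '' {I : Set α | M.Indep I ∧ I ⊆ A}).Nonempty :=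
  ⟨_, ∅, ⟨M.empty_indep, Set.empty_subset _⟩, rfl⟩

theorem rank_le_card {α : Type*} [Fintype α] (M : Matroid α) (A : Finset α) :
    M.rankFun (A : Set α) ≤ A.card := by
  apply csSup_le (nonempty M _)
  rintro _ ⟨I, ⟨_, hI⟩, rfl⟩
  rw [← Set.ncard_coe_finset A]
  exact Set.ncard_le_ncard hI (Set.toFinite _)

theorem rank_mono {α : Type*} [Fintype α] (M : Matroid α) {A B : Set α} (h : A ⊆ B) :
    M.rankFun A ≤ M.rankFun B :=
  csSup_le_csSup (bdd M B) (nonempty M A)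
    (Set.image_mono fun _ hI => ⟨hI.1, hI.2.trans h⟩)

/-- The bounded factor of a normalized summand. -/
noncomputable def coef (m : ℝ) (a b : ℕ) (q : ℝ) : ℝ :=
  (1 - q ^ (-(m - 1))) ^ a * (1 - q⁻¹) ^ b

theorem coef_tendsto (m : ℝ) (hm : 1 < m) (a b : ℕ) :
    Tendsto (coef m a b) atTop (nhds 1) := by
  have h1 : Tendsto (fun q : ℝ => q ^ (-(m - 1))) atTop (nhds 0) :=
    tendsto_rpow_neg_atTop (by linarith)
  have h2 : Tendsto (fun q : ℝ => q⁻¹) atTop (nhds 0) := tendsto_inv_atTop_zero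
  have := ((h1.const_sub 1).pow a).mul ((h2.const_sub 1).pow b)
  simp only [sub_zero, one_pow, mul_one] at this
  exact this

theorem coef_nonneg (m : ℝ) (hm : 1 < m) (a b : ℕ) {q : ℝ} (hq : 1 < q) :
    0 ≤ coef m a b q := by
  have h1 : q ^ (-(m - 1)) ≤ 1 := Real.rpow_le_one_of_one_le_of_nonpos hq.le (by linarith)
  have h2 : q⁻¹ ≤ 1 := inv_le_one_of_one_le₀ hq.le
  exact mul_nonneg (pow_nonneg (by linarith) _) (pow_nonneg (by linarith) _)

theorem term_eq (m : ℝ) {R r n : ℕ} (h1 : r ≤ R) (h2 : r ≤ n) {q : ℝ} (hq : 1 < q) :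
    (q ^ (m - 1) - 1) ^ (R - r) * (q - 1) ^ (n - r) / q ^ ((m - 1) * (R : ℝ)) =
      coef m (R - r) (n - r) q * q ^ ((n : ℝ) - m * r) := by
  have hq0 : 0 < q := by linarith
  have e1 : q ^ (m - 1) - 1 = q ^ (m - 1) * (1 - q ^ (-(m - 1))) := by
    rw [mul_sub, ← Real.rpow_add hq0]; simp
  have e2 : q - 1 = q * (1 - q⁻¹) := by field_simp
  have e3 : (q ^ (m - 1)) ^ (R - r) * q ^ (n - r) =
      q ^ ((n : ℝ) - m * r) * q ^ ((m - 1) * (R : ℝ)) := by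
    rw [← Real.rpow_natCast, ← Real.rpow_natCast, ← Real.rpow_mul hq0.le,
      ← Real.rpow_add hq0, ← Real.rpow_add hq0]
    push_cast [h1, h2]
    congr 1; ring
  have hp : q ^ ((m - 1) * (R : ℝ)) ≠ 0 := (Real.rpow_pos_of_pos hq0 _).ne'
  rw [div_eq_iff hp]
  conv_lhs => rw [e1, e2]
  rw [mul_pow, mul_pow, coef]
  linear_combination ((1 - q ^ (-(m - 1))) ^ (R - r) * (1 - q⁻¹) ^ (n - r)) * e3

end LamanAux

open LamanAux in
theorem laman_iff_tutte_monic {α : Type*} [Fintype α] (M : Matroid α)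
    (hE : M.E = Set.univ) (m : ℝ) (hm : 1 < m) :
    M.LamanIndep m Set.univ ↔
      Tendsto (fun q : ℝ =>
          tutteEval M m q / q ^ ((m - 1) * (M.rankFun Set.univ : ℝ)))
        atTop (nhds 1) := by
  classical
  let c : Finset α → ℝ → ℝ := fun A q =>
    coef m (M.rankFun Set.univ - M.rankFun (A : Set α)) (A.card - M.rankFun (A : Set α)) q
  let t : Finset α → ℝ → ℝ := fun A q =>
    c A q * q ^ ((A.card : ℝ) - m * (M.rankFun (A : Set α) : ℝ))
  have hc : ∀ A, Tendsto (c A) atTop (nhds 1) := fun A => coef_tendsto m hm _ _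
  have hcn : ∀ A (q : ℝ), 1 < q → 0 ≤ c A q := fun A q hq => coef_nonneg m hm _ _ hq
  have htn : ∀ A (q : ℝ), 1 < q → 0 ≤ t A q := fun A q hq =>
    mul_nonneg (hcn A q hq) (Real.rpow_nonneg (by linarith) _)
  have hr0 : M.rankFun ((∅ : Finset α) : Set α) = 0 := by
    simpa using rank_le_card M ∅
  have ht0 : t ∅ = c ∅ := by
    funext q
    simp only [t, hr0]; simp
  have hT : (fun q : ℝ => tutteEval M m q / q ^ ((m - 1) * (M.rankFun Set.univ : ℝ)))
      =ᶠ[atTop] fun q => ∑ A, t A q := by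
    filter_upwards [eventually_gt_atTop 1] with q hq
    rw [tutteEval, Finset.sum_div]
    exact Finset.sum_congr rfl fun A _ =>
      term_eq m (rank_mono M (Set.subset_univ _)) (rank_le_card M A) hq
  rw [tendsto_congr' hT]
  constructor
  · intro hL
    have : Tendsto (fun q => ∑ A, t A q) atTop
        (nhds (∑ A : Finset α, if A = ∅ then (1 : ℝ) else 0)) := by
      apply tendsto_finsetSum
      intro A _
      split_ifs with hA
      · subst hA
        rw [ht0]
        exact hc ∅
      · have h := hL (A : Set α) (Set.subset_univ _)
          (by simpa using Finset.nonempty_iff_ne_empty.2 hA)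
        rw [Set.ncard_coe_finset] at h
        have h2 := tendsto_rpow_neg_atTop
          (y := m * (M.rankFun (A : Set α) : ℝ) - A.card) (by linarith)
        have := (hc A).mul h2
        simpa [t] using this
    simpa using this
  · intro hlim A' _ hne
    by_contra hlt
    push Not at hlt
    obtain ⟨A, rfl⟩ : ∃ A : Finset α, (A : Set α) = A' :=
      ⟨(Set.toFinite A').toFinset, by simp⟩
    rw [Set.ncard_coe_finset] at hlt
    have hA : (∅ : Finset α) ≠ A := by
      rintro rfl
      simp at hne
    have h2 : Tendsto (fun q => c ∅ q + c A q) atTop (nhds (1 + 1)) := (hc ∅).add (hc A)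
    have hle : (fun q => c ∅ q + c A q) ≤ᶠ[atTop] fun q => ∑ A, t A q := by
      filter_upwards [eventually_gt_atTop 1] with q hq
      calc c ∅ q + c A q ≤ t ∅ q + t A q := by
            rw [ht0]
            gcongr
            exact le_mul_of_one_le_right (hcn A q hq)
              (Real.one_le_rpow hq.le (by linarith))
        _ = ∑ B ∈ ({∅, A} : Finset (Finset α)), t B q := (Finset.sum_pair (f := fun B => t B q) hA).symm
        _ ≤ _ := Finset.sum_le_sum_of_subset_of_nonneg (Finset.subset_univ _)
            fun B _ _ => htn B q hq
    have := le_of_tendsto_of_tendsto h2 hlim hle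
    norm_num at this
end

section
/- Let M be a matroid on a finite ground set E with rank function r and closure operator cl, and let d be a positive integer. Then the following are equivalent: (i) E has a d-Edmonds decomposition; (ii) E is d-Laman independent, i.e., d · r(A) > |A| for every nonempty A ⊆ E; (iii) E is d-Recski independent, i.e., for every e ∈ E there exist independent sets J_1, …, J_d of M such that every element of E ∖ {e} belongs to exactly one of the J_j and e belongs to exactly two of the J_j (equivalently, the multiset E ∪ {e}, with e doubled, is partitioned into d independent sets). -/
/-- A `d`-Edmonds decomposition of a matroid `M`: a partition of the ground set
into `d` independent sets `I 0, …, I (d-1)` such that there do not exist subsets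
`I' j ⊆ I j`, not all empty, all having the same closure. -/
def Matroid.EdmondsDecomp {α : Type*} (M : Matroid α) (d : ℕ) (I : Fin d → Set α) : Prop :=
  (∀ j, M.Indep (I j)) ∧ (⋃ j, I j) = M.E ∧
    (Pairwise fun j j' => Disjoint (I j) (I j')) ∧
    ¬ ∃ I' : Fin d → Set α, (∀ j, I' j ⊆ I j) ∧ (∃ j, (I' j).Nonempty) ∧
        ∀ j j', M.closure (I' j) = M.closure (I' j')

/-- `E` is `d`-Laman independent: `d · r(A) > |A|` for every nonempty `A ⊆ E`. -/
def Matroid.DLamanIndep {α : Type*} (M : Matroid α) (d : ℕ) : Prop :=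
  ∀ A ⊆ M.E, A.Nonempty → A.ncard < d * M.rankFun A

/-- `E` is `d`-Recski independent: for every `e ∈ E` the multiset `E ∪ {e}`
(with `e` doubled) can be partitioned into `d` independent sets; i.e. there are
independent sets `J 0, …, J (d-1)` such that each element of `E \ {e}` lies in
exactly one of them and `e` lies in exactly two of them. -/
def Matroid.RecskiIndep {α : Type*} (M : Matroid α) (d : ℕ) : Prop :=
  ∀ e ∈ M.E, ∃ J : Fin d → Set α, (∀ j, M.Indep (J j)) ∧
    (∀ x ∈ M.E \ {e}, ({j : Fin d | x ∈ J j}).ncard = 1) ∧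
    ({j : Fin d | e ∈ J j}).ncard = 2

/-- Rado-type partition theorem for a submodular function. -/
theorem submod_partition {ι : Type*} [Fintype ι] [DecidableEq ι] (d : ℕ)
    (r : Finset ι → ℕ) (r0 : r ∅ = 0) (rmono : ∀ A B, A ⊆ B → r A ≤ r B)
    (rsub : ∀ A B, r (A ∪ B) + r (A ∩ B) ≤ r A + r B)
    (h : ∀ K, K.card ≤ d * r K) :
    ∃ c : ι → Fin d, ∀ j, (Finset.univ.filter (fun i => c i = j)).card ≤
      r (Finset.univ.filter (fun i => c i = j)) := by
  classical
  let P : (ι → Finset (Fin d)) → Prop := fun S =>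
    ∀ K : Finset ι, K.card ≤ ∑ j, r (K.filter (fun i => j ∈ S i))
  have hP : P (fun _ => Finset.univ) := by
    intro K
    simpa using h K
  obtain ⟨S, -, hS⟩ := exists_minimal_le_of_wellFoundedLT P _ hP
  have key : ∀ i x y, x ∈ S i → y ∈ S i → x = y := by
    intro i x y hx hy
    by_contra hxy
    have rem : ∀ z ∈ S i, ∃ K : Finset ι,
        ∑ j, r (K.filter (fun k => j ∈ Function.update S i ((S i).erase z) k)) < K.card := by
      intro z hz
      by_contra hcon
      push Not at hcon
      have hle : Function.update S i ((S i).erase z) ≤ S := by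
        intro k
        by_cases hk : k = i
        · subst hk; simpa using Finset.erase_subset _ _
        · simp [hk]
      have := hS.2 hcon hle i
      simp only [Function.update_self] at this
      exact Finset.notMem_erase z (S i) (this hz)
    obtain ⟨K, hK⟩ := rem x hx
    obtain ⟨L, hL⟩ := rem y hy
    have memK : ∀ (Q : Finset ι) (z : Fin d), Q.card > ∑ j, r (Q.filter (fun k => j ∈ Function.update S i ((S i).erase z) k)) → i ∈ Q := by
      intro Q z hQ
      by_contra hi
      have h1 := hS.1 Q
      have h2 : ∀ j, Q.filter (fun k => j ∈ Function.update S i ((S i).erase z) k)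
          = Q.filter (fun k => j ∈ S k) := by
        intro j
        apply Finset.filter_congr
        intro k hk
        have : k ≠ i := by rintro rfl; exact hi hk
        simp [this]
      simp only [h2] at hQ
      omega
    have hiK := memK K x hK
    have hiL := memK L y hL
    have hsum : ∑ j, r ((K ∪ L).filter (fun k => j ∈ S k)) +
        ∑ j, r (((K ∩ L).erase i).filter (fun k => j ∈ S k)) ≤
        ∑ j, r (K.filter (fun k => j ∈ Function.update S i ((S i).erase x) k)) +
        ∑ j, r (L.filter (fun k => j ∈ Function.update S i ((S i).erase y) k)) := by
      rw [← Finset.sum_add_distrib, ← Finset.sum_add_distrib]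
      apply Finset.sum_le_sum
      intro j _
      refine le_trans (add_le_add (rmono _ _ ?_) (rmono _ _ ?_)) (rsub _ _)
      · intro k hk
        simp only [Finset.mem_filter, Finset.mem_union] at hk ⊢
        by_cases hki : k = i
        · subst hki
          simp only [Function.update_self, Finset.mem_erase]
          by_cases hjx : j = x
          · right; exact ⟨hiL, by rw [hjx]; exact hxy, hk.2⟩
          · left; exact ⟨hiK, hjx, hk.2⟩
        · simp only [Function.update_of_ne hki]
          tauto
      · intro k hk
        simp only [Finset.mem_filter, Finset.mem_inter, Finset.mem_erase] at hk ⊢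
        simp only [Function.update_of_ne hk.1.1]
        tauto
    have h1 := hS.1 (K ∪ L)
    have h2 := hS.1 ((K ∩ L).erase i)
    have h3 := Finset.card_union_add_card_inter K L
    have h4 := Finset.card_erase_add_one (Finset.mem_inter.2 ⟨hiK, hiL⟩)
    omega
  have ne : ∀ i, (S i).Nonempty := by
    intro i
    by_contra hne
    rw [Finset.not_nonempty_iff_eq_empty] at hne
    have := hS.1 {i}
    simp [Finset.filter_singleton, hne, r0] at this
  choose c hc using ne
  refine ⟨c, fun j => ?_⟩
  have := hS.1 (Finset.univ.filter (fun i => c i = j))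
  rw [Finset.sum_eq_single j] at this
  · exact this.trans (rmono _ _ (Finset.filter_subset _ _))
  · intro j' _ hj'
    rw [Finset.filter_eq_empty_iff.2, r0]
    intro k hk hkj
    exact hj' ((key k _ _ hkj (hc k)).trans (Finset.mem_filter.1 hk).2)
  · simp

theorem rankFun_coe {α : Type*} (M : Matroid α) (hfin : M.E.Finite) (A : Set α) :
    (M.rankFun A : ℕ∞) = M.eRk A := by
  obtain ⟨I, hI⟩ := M.exists_isBasis' A
  have hIf : I.Finite := hfin.subset hI.indep.subset_ground
  have : M.rankFun A = I.ncard := by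
    apply IsGreatest.csSup_eq
    refine ⟨⟨I, ⟨hI.indep, hI.subset⟩, rfl⟩, ?_⟩
    rintro _ ⟨J, ⟨hJ, hJA⟩, rfl⟩
    have h1 := hJ.encard_le_eRk_of_subset hJA
    rw [hI.eRk_eq_encard, ← hIf.cast_ncard_eq,
      ← (hfin.subset hJ.subset_ground).cast_ncard_eq] at h1
    exact_mod_cast h1
  rw [this, hIf.cast_ncard_eq, hI.eRk_eq_encard]

theorem indep_family {α ι : Type*} [Fintype ι] [DecidableEq ι] (M : Matroid α)
    (hfin : M.E.Finite) (d : ℕ) (f : ι → α)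
    (h : ∀ K : Finset ι, K.card ≤ d * M.rankFun (f '' K)) :
    ∃ c : ι → Fin d, ∀ j, M.Indep (f '' {i | c i = j}) ∧ Set.InjOn f {i | c i = j} := by
  have mono : ∀ A B : Set α, A ⊆ B → M.rankFun A ≤ M.rankFun B := by
    intro A B hAB
    have := M.eRk_mono hAB
    rw [← rankFun_coe M hfin, ← rankFun_coe M hfin] at this
    exact_mod_cast this
  have sub : ∀ A B : Set α, M.rankFun (A ∩ B) + M.rankFun (A ∪ B) ≤ M.rankFun A + M.rankFun B := by
    intro A B
    have := M.eRk_inter_add_eRk_union_le A B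
    simp only [← rankFun_coe M hfin] at this
    exact_mod_cast this
  have zero : M.rankFun ∅ = 0 := by
    have := M.eRk_empty
    rw [← rankFun_coe M hfin] at this
    exact_mod_cast this
  obtain ⟨c, hc⟩ := submod_partition d (fun K : Finset ι => M.rankFun (f '' (K : Set ι)))
    (by simpa using zero) (fun A B hAB => mono _ _ (Set.image_mono (by exact_mod_cast hAB)))
    (by
      intro A B
      have h1 := sub (f '' (A : Set ι)) (f '' (B : Set ι))
      have h2 := mono (f '' ((A ∩ B : Finset ι) : Set ι)) (f '' (A : Set ι) ∩ f '' (B : Set ι))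
        (by rw [Finset.coe_inter]; exact Set.image_inter_subset _ _ _)
      simp only [Finset.coe_union, Set.image_union]
      omega) h
  refine ⟨c, fun j => ?_⟩
  have hj := hc j
  have hcoe : ((Finset.univ.filter (fun i => c i = j) : Finset ι) : Set ι) = {i | c i = j} := by
    ext; simp
  simp only [hcoe] at hj
  have hcard : (Finset.univ.filter (fun i => c i = j)).card = ({i | c i = j} : Set ι).ncard := by
    rw [← hcoe, Set.ncard_coe_finset]
  rw [hcard] at hj
  have hf : (f '' {i | c i = j}).Finite := Set.toFinite _
  have h1 : M.rankFun (f '' {i | c i = j}) ≤ (f '' {i | c i = j}).ncard := by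
    have := M.eRk_le_encard (f '' {i | c i = j})
    rw [← rankFun_coe M hfin, ← hf.cast_ncard_eq] at this
    exact_mod_cast this
  have h2 : (f '' {i | c i = j}).ncard ≤ ({i | c i = j} : Set ι).ncard :=
    Set.ncard_image_le (Set.toFinite _)
  constructor
  · rw [Matroid.indep_iff_eRk_eq_encard_of_finite hf, ← rankFun_coe M hfin, ← hf.cast_ncard_eq]
    congr 1
    omega
  · exact (Set.ncard_image_iff (Set.toFinite _)).1 (by omega)

theorem sum_ncard_inter {α : Type*} {d : ℕ} (J : Fin d → Set α) (A : Set α) (hA : A.Finite) :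
    ∑ j, (A ∩ J j).ncard = ∑ x ∈ hA.toFinset, ({j | x ∈ J j} : Set (Fin d)).ncard := by
  classical
  have := Finset.sum_card_bipartiteAbove_eq_sum_card_bipartiteBelow
    (s := (Finset.univ : Finset (Fin d))) (t := hA.toFinset) (fun j x => x ∈ J j)
  convert this using 2 with j _ x _
  · rw [← Set.ncard_coe_finset]
    congr 1
    ext x; simp [Finset.bipartiteAbove]
  · rw [← Set.ncard_coe_finset]
    congr 1
    ext x; simp [Finset.bipartiteBelow]

theorem inter_indep_le {α : Type*} (M : Matroid α) (hfin : M.E.Finite) (A J : Set α)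
    (hJ : M.Indep J) : (A ∩ J).ncard ≤ M.rankFun A := by
  have hi := hJ.subset (Set.inter_subset_right (s := A))
  have h1 := hi.encard_le_eRk_of_subset (Set.inter_subset_left (s := A) (t := J))
  rw [← rankFun_coe M hfin, ← (hfin.subset hi.subset_ground).cast_ncard_eq] at h1
  exact_mod_cast h1

theorem partition_ncard {α : Type*} {d : ℕ} (I : Fin d → Set α)
    (hI : Pairwise fun j j' => Disjoint (I j) (I j')) (A : Set α) (hA : A.Finite)
    (hAI : A ⊆ ⋃ j, I j) : ∑ j, (A ∩ I j).ncard = A.ncard := by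
  rw [sum_ncard_inter I A hA, Set.ncard_eq_toFinset_card A hA, Finset.card_eq_sum_ones]
  apply Finset.sum_congr rfl
  intro x hx
  obtain ⟨j, hj⟩ := Set.mem_iUnion.1 (hAI (hA.mem_toFinset.1 hx))
  rw [Set.ncard_eq_one]
  refine ⟨j, ?_⟩
  ext j'
  simp only [Set.mem_setOf_eq, Set.mem_singleton_iff]
  constructor
  · intro hj'
    by_contra hne
    exact Set.disjoint_left.1 (hI hne) hj' hj
  · rintro rfl; exact hj

theorem edmonds_to_laman {α : Type*} (M : Matroid α) (hfin : M.E.Finite)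
    (d : ℕ) (I : Fin d → Set α) (h : M.EdmondsDecomp d I) : M.DLamanIndep d := by
  obtain ⟨hi, hU, hD, hno⟩ := h
  intro A hAE hne
  by_contra hlt
  push Not at hlt
  have hAf := hfin.subset hAE
  have hsum := partition_ncard I hD A hAf (hU ▸ hAE)
  have hle : ∀ j ∈ Finset.univ, (A ∩ I j).ncard ≤ M.rankFun A :=
    fun j _ => inter_indep_le M hfin A (I j) (hi j)
  have hconst : ∑ _j : Fin d, M.rankFun A = d * M.rankFun A := by simp
  have heq := (Finset.sum_eq_sum_iff_of_le hle).1
    (le_antisymm (Finset.sum_le_sum hle) (by omega))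
  have hcl : ∀ j, M.closure (A ∩ I j) = M.closure A := by
    intro j
    have hind := (hi j).subset (Set.inter_subset_right (s := A))
    apply (M.isRkFinite_of_finite (hAf.subset Set.inter_subset_left)).closure_eq_closure_of_subset_of_eRk_ge_eRk Set.inter_subset_left
    rw [hind.eRk_eq_encard, ← rankFun_coe M hfin, ← heq j (Finset.mem_univ j),
      (hAf.subset Set.inter_subset_left).cast_ncard_eq]
  apply hno
  refine ⟨fun j => A ∩ I j, fun j => Set.inter_subset_right, ?_, fun j j' => by rw [hcl, hcl]⟩
  obtain ⟨x, hx⟩ := hne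
  obtain ⟨j, hj⟩ := Set.mem_iUnion.1 (hU.symm ▸ hAE hx : x ∈ ⋃ j, I j)
  exact ⟨j, x, hx, hj⟩

theorem no_common {α : Type*} (M : Matroid α) (hfin : M.E.Finite)
    (d : ℕ) (h : M.DLamanIndep d) (I : Fin d → Set α) (hi : ∀ j, M.Indep (I j))
    (hU : (⋃ j, I j) = M.E) (hD : Pairwise fun j j' => Disjoint (I j) (I j')) :
    ¬ ∃ I' : Fin d → Set α, (∀ j, I' j ⊆ I j) ∧ (∃ j, (I' j).Nonempty) ∧
        ∀ j j', M.closure (I' j) = M.closure (I' j') := by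
  rintro ⟨I', hsub, ⟨j0, hne⟩, hcl⟩
  have hind : ∀ j, M.Indep (I' j) := fun j => (hi j).subset (hsub j)
  have hAE : (⋃ j, I' j) ⊆ M.E := Set.iUnion_subset fun j => (hind j).subset_ground
  have hAf := hfin.subset hAE
  have h1 := h _ hAE (hne.mono (Set.subset_iUnion I' j0))
  have hr : ∀ j, M.rankFun (⋃ j, I' j) ≤ (I' j).ncard := by
    intro j
    have hs : (⋃ j, I' j) ⊆ M.closure (I' j) := Set.iUnion_subset fun k => by
      rw [hcl j k]; exact M.subset_closure _ (hind k).subset_ground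
    have := M.eRk_mono hs
    rw [M.eRk_closure_eq, (hind j).eRk_eq_encard, ← rankFun_coe M hfin,
      ← (hfin.subset (hind j).subset_ground).cast_ncard_eq] at this
    exact_mod_cast this
  have hp := partition_ncard I hD _ hAf (hU ▸ hAE)
  have hge : ∑ _j : Fin d, M.rankFun (⋃ j, I' j) ≤ ∑ j, ((⋃ j, I' j) ∩ I j).ncard :=
    Finset.sum_le_sum fun j _ => (hr j).trans (Set.ncard_le_ncard
      (Set.subset_inter (Set.subset_iUnion I' j) (hsub j)) (hAf.subset Set.inter_subset_left))
  simp only [Finset.sum_const, Finset.card_univ, Fintype.card_fin, smul_eq_mul] at hge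
  omega

theorem laman_to_edmonds {α : Type*} (M : Matroid α) (hfin : M.E.Finite)
    (d : ℕ) (h : M.DLamanIndep d) : ∃ I : Fin d → Set α, M.EdmondsDecomp d I := by
  classical
  haveI : Fintype M.E := hfin.fintype
  obtain ⟨c, hc⟩ := indep_family M hfin d (fun x : M.E => (x : α)) (by
    intro K
    rcases K.eq_empty_or_nonempty with rfl | hK
    · simp
    · have := h ((fun x : M.E => (x : α)) '' K) (by rintro _ ⟨x, -, rfl⟩; exact x.2)
        ((Finset.coe_nonempty.2 hK).image _)
      rw [Set.ncard_image_of_injective _ Subtype.val_injective, Set.ncard_coe_finset] at this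
      exact this.le)
  have hU : (⋃ j, (fun x : M.E => (x : α)) '' {i | c i = j}) = M.E := by
    ext x
    simp
  have hD : Pairwise fun j j' => Disjoint ((fun x : M.E => (x : α)) '' {i | c i = j})
      ((fun x : M.E => (x : α)) '' {i | c i = j'}) := by
    intro j j' hjj
    rw [Set.disjoint_left]
    rintro _ ⟨x, hx, rfl⟩ ⟨y, hy, hxy⟩
    have : y = x := Subtype.ext hxy
    subst this
    exact hjj (hx.symm.trans hy)
  refine ⟨_, fun j => (hc j).1, hU, hD, ?_⟩
  exact no_common M hfin d h _ (fun j => (hc j).1) hU hD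

theorem laman_to_recski {α : Type*} (M : Matroid α) (hfin : M.E.Finite)
    (d : ℕ) (h : M.DLamanIndep d) : M.RecskiIndep d := by
  classical
  intro e he
  haveI : Fintype M.E := hfin.fintype
  let f : Option M.E → α := fun o => o.elim e (fun x => (x : α))
  obtain ⟨c, hc⟩ := indep_family M hfin d f (by
    intro K
    rcases K.eq_empty_or_nonempty with rfl | hK
    · simp
    · have h1 := h (f '' K) (by rintro _ ⟨x, -, rfl⟩; cases x; exacts [he, Subtype.prop _])
        ((Finset.coe_nonempty.2 hK).image _)
      have h2 : (f '' (K.erase none : Finset (Option M.E))).ncard ≤ (f '' (K : Set (Option M.E))).ncard :=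
        Set.ncard_le_ncard (Set.image_mono (by simp)) (Set.toFinite _)
      rw [Set.ncard_image_of_injOn, Set.ncard_coe_finset] at h2
      · have := Finset.pred_card_le_card_erase (s := K) (a := none)
        omega
      · intro x hx y hy hxy
        cases x <;> cases y <;> simp_all [f, Subtype.ext_iff])
  refine ⟨fun j => f '' {i | c i = j}, fun j => (hc j).1, ?_, ?_⟩
  · rintro x ⟨hx, hxe⟩
    rw [Set.ncard_eq_one]
    refine ⟨c (some ⟨x, hx⟩), ?_⟩
    ext j
    simp only [Set.mem_setOf_eq, Set.mem_singleton_iff, Set.mem_image]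
    constructor
    · rintro ⟨o, ho, hox⟩
      cases o with
      | none => exact absurd hox.symm hxe
      | some y =>
        have : y = ⟨x, hx⟩ := Subtype.ext hox
        rw [← ho, this]
    · rintro rfl
      exact ⟨_, rfl, rfl⟩
  · rw [Set.ncard_eq_two]
    refine ⟨c none, c (some ⟨e, he⟩), ?_, ?_⟩
    · intro hcc
      have := (hc (c none)).2 (show none ∈ {i | c i = c none} from rfl)
        (show some ⟨e, he⟩ ∈ {i | c i = c none} from hcc.symm) rfl
      simp at this
    · ext j
      simp only [Set.mem_setOf_eq, Set.mem_insert_iff, Set.mem_singleton_iff, Set.mem_image]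
      constructor
      · rintro ⟨o, ho, hox⟩
        cases o with
        | none => exact Or.inl ho.symm
        | some y =>
          have : y = ⟨e, he⟩ := Subtype.ext hox
          rw [← ho, this]; exact Or.inr rfl
      · rintro (rfl | rfl)
        · exact ⟨_, rfl, rfl⟩
        · exact ⟨_, rfl, rfl⟩

theorem recski_to_laman {α : Type*} (M : Matroid α) (hfin : M.E.Finite)
    (d : ℕ) (h : M.RecskiIndep d) : M.DLamanIndep d := by
  classical
  rintro A hAE ⟨e, he⟩
  obtain ⟨J, hJ, h1, h2⟩ := h e (hAE he)
  have hAf := hfin.subset hAE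
  have hs := sum_ncard_inter J A hAf
  have hone : ∑ x ∈ hAf.toFinset.erase e, ({j | x ∈ J j} : Set (Fin d)).ncard
      = ∑ _x ∈ hAf.toFinset.erase e, 1 := by
    apply Finset.sum_congr rfl
    intro x hx
    have hx' := Finset.mem_erase.1 hx
    exact h1 x ⟨hAE (hAf.mem_toFinset.1 hx'.2), hx'.1⟩
  rw [← Finset.add_sum_erase _ _ (hAf.mem_toFinset.2 he), h2, hone,
    ← Finset.card_eq_sum_ones] at hs
  have h3 := Finset.card_erase_add_one (hAf.mem_toFinset.2 he)
  have h4 : ∑ j, (A ∩ J j).ncard ≤ ∑ _j : Fin d, M.rankFun A :=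
    Finset.sum_le_sum fun j _ => inter_indep_le M hfin A (J j) (hJ j)
  rw [Set.ncard_eq_toFinset_card A hAf]
  simp only [Finset.sum_const, Finset.card_univ, Fintype.card_fin, smul_eq_mul] at h4
  omega

/-- **Theorem (equivalence of Edmonds, Laman and Recski independence).**
For a matroid `M` on a finite ground set and a positive integer `d`, the
following are equivalent: (i) `M` has a `d`-Edmonds decomposition;
(ii) the ground set is `d`-Laman independent; (iii) the ground set is
`d`-Recski independent. -/
theorem edmonds_laman_recski_equiv {α : Type*} (M : Matroid α) (hfin : M.E.Finite)
    (d : ℕ) (hd : 0 < d) :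
    ((∃ I : Fin d → Set α, M.EdmondsDecomp d I) ↔ M.DLamanIndep d) ∧
      (M.DLamanIndep d ↔ M.RecskiIndep d) := by
  exact ⟨⟨fun ⟨I, hI⟩ => edmonds_to_laman M hfin d I hI, laman_to_edmonds M hfin d⟩,
    ⟨laman_to_recski M hfin d, recski_to_laman M hfin d⟩⟩
end

section
/- Let M be a loopless matroid on a finite ground set E = {1,…,n} with rank function r, and let m > 1 be a real number. Then there exists a function ρ : 2^E → ℝ_{≥0} which is monotone (ρ(A) ≤ ρ(B) whenever A ⊆ B), submodular (ρ(A ∪ B) + ρ(A ∩ B) ≤ ρ(A) + ρ(B) for all A, B ⊆ E), and normalized (ρ(∅) = 0), such that for every A ⊆ E: A is m-Laman independent if and only if the characteristic vector of A is an independent vector of the polymatroid of ρ, i.e., |A ∩ B| ≤ ρ(B) for every subset B ⊆ E. -/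
theorem Matroid.coe_rankFun {α : Type*} [Fintype α] (M : Matroid α) (A : Set α) :
    ((M.rankFun A : ℕ) : ℕ∞) = M.eRk A := by
  obtain ⟨I, hI⟩ := M.exists_isBasis' A
  have hg : IsGreatest (Set.ncard '' {I : Set α | M.Indep I ∧ I ⊆ A}) I.ncard := by
    refine ⟨⟨I, ⟨hI.indep, hI.subset⟩, rfl⟩, ?_⟩
    rintro _ ⟨J, ⟨hJ, hJA⟩, rfl⟩
    have h := hJ.encard_le_eRk_of_subset hJA
    rw [← hI.encard_eq_eRk, ← (Set.toFinite J).cast_ncard_eq,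
      ← (Set.toFinite I).cast_ncard_eq] at h
    exact_mod_cast h
  rw [Matroid.rankFun, hg.csSup_eq, (Set.toFinite I).cast_ncard_eq, hI.encard_eq_eRk]

theorem Matroid.rankFun_mono' {α : Type*} [Fintype α] (M : Matroid α) {A B : Set α}
    (h : A ⊆ B) : M.rankFun A ≤ M.rankFun B := by
  have := M.eRk_mono h
  rw [← M.coe_rankFun, ← M.coe_rankFun] at this
  exact_mod_cast this

theorem Matroid.rankFun_submod' {α : Type*} [Fintype α] (M : Matroid α) (A B : Set α) :
    M.rankFun (A ∪ B) + M.rankFun (A ∩ B) ≤ M.rankFun A + M.rankFun B := by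
  have := M.eRk_inter_add_eRk_union_le A B
  simp only [← M.coe_rankFun] at this
  rw [add_comm]
  exact_mod_cast this

theorem Matroid.rankFun_pos' {α : Type*} [Fintype α] (M : Matroid α)
    (hl : ∀ x : α, M.Indep {x}) {A : Set α} (h : A.Nonempty) : 1 ≤ M.rankFun A := by
  obtain ⟨x, hx⟩ := h
  have := (hl x).encard_le_eRk_of_subset (Set.singleton_subset_iff.2 hx)
  rw [← M.coe_rankFun, Set.encard_singleton] at this
  exact_mod_cast this

/-- **Proposition (the Laman complex is polymatroidal).**
Let `M` be a loopless matroid on a finite ground set `E` (here `E = univ` for a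
finite type) and let `m > 1` be real.  Then there is a monotone, submodular,
normalized function `ρ : 2^E → ℝ≥0` such that a set `A ⊆ E` is `m`-Laman
independent if and only if the characteristic vector of `A` is an independent
vector of the polymatroid of `ρ`, i.e. `|A ∩ B| ≤ ρ(B)` for every `B ⊆ E`. -/
theorem laman_polymatroidal {α : Type*} [Fintype α] (M : Matroid α)
    (hE : M.E = Set.univ) (hloopless : ∀ x : α, M.Indep {x})
    (m : ℝ) (hm : 1 < m) :
    ∃ ρ : Set α → ℝ,
      (∀ A, 0 ≤ ρ A) ∧
      (∀ A B, A ⊆ B → ρ A ≤ ρ B) ∧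
      (∀ A B, ρ (A ∪ B) + ρ (A ∩ B) ≤ ρ A + ρ B) ∧
      ρ ∅ = 0 ∧
      ∀ A : Set α, (M.LamanIndep m A ↔ ∀ B : Set α, ((A ∩ B).ncard : ℝ) ≤ ρ B) := by
  have hev : ∀ᶠ c in nhdsWithin m (Set.Iio m), ∀ A : Set α,
      (A.ncard : ℝ) < m * (M.rankFun A : ℝ) → (A.ncard : ℝ) < c * (M.rankFun A : ℝ) := by
    rw [Filter.eventually_all]
    intro A
    by_cases h : (A.ncard : ℝ) < m * (M.rankFun A : ℝ)
    · have hc : Continuous fun c : ℝ => c * (M.rankFun A : ℝ) := by fun_prop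
      have := (hc.tendsto m).eventually_const_lt h
      exact (this.filter_mono nhdsWithin_le_nhds).mono fun c hc _ => hc
    · exact Filter.Eventually.of_forall fun c h' => absurd h' h
  have hpos : ∀ᶠ c in nhdsWithin m (Set.Iio m), (0 : ℝ) < c :=
    (eventually_gt_nhds (by linarith)).filter_mono nhdsWithin_le_nhds
  obtain ⟨c, hc, hc0, hcm⟩ := (hev.and (hpos.and self_mem_nhdsWithin)).exists
  have hcm : c < m := hcm
  have hmono : ∀ A B : Set α, A ⊆ B → c * (M.rankFun A : ℝ) ≤ c * (M.rankFun B : ℝ) := by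
    intro A B h
    have : (M.rankFun A : ℝ) ≤ M.rankFun B := by exact_mod_cast M.rankFun_mono' h
    gcongr
  refine ⟨fun A => c * (M.rankFun A : ℝ), fun A => by positivity, hmono, ?_, ?_, ?_⟩
  · intro A B
    have : (M.rankFun (A ∪ B) : ℝ) + M.rankFun (A ∩ B) ≤ M.rankFun A + M.rankFun B := by
      exact_mod_cast M.rankFun_submod' A B
    nlinarith
  · have := M.coe_rankFun ∅
    rw [M.eRk_empty] at this
    have : M.rankFun ∅ = 0 := by exact_mod_cast this
    simp [this]
  · intro A
    constructor
    · intro h B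
      rcases (A ∩ B).eq_empty_or_nonempty with he | hne
      · rw [he, Set.ncard_empty]
        push_cast
        positivity
      · exact (hc _ (h _ Set.inter_subset_left hne)).le.trans (hmono _ _ Set.inter_subset_right)
    · intro h A' hA' hne
      have h1 := h A'
      rw [Set.inter_eq_self_of_subset_right hA'] at h1
      have h2 : (1 : ℝ) ≤ M.rankFun A' := by exact_mod_cast M.rankFun_pos' hloopless hne
      nlinarith
end

section
/- Let F be a finite field with q elements and let 0 < k < d be integers with d ≥ 2. Let v_1, …, v_n be the columns of an r × n matrix V over F of rank r, and let v*_1, …, v*_n be the columns of an (n−r) × n matrix V* over F of rank n−r whose row space equals the null space of V (so V · (V*)^T = 0). Let M be the matroid represented by v_1,…,v_n ⊂ F^r and M^⊥ the (dual) matroid represented by v*_1,…,v*_n ⊂ F^{n−r}. Then q^{d·r} · |X_{d−k,d}(M^⊥)| = q^{(d−k)·n} · |X_{k,d}(M)|. -/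
/-- The space of `(k,d)`-photos of the matroid represented by
`v : Fin n → F^r`: pairs `(φ, W)` where `φ : F^r → F^d` is linear, each `W i`
is a `k`-dimensional subspace of `F^d`, and `φ (v i) ∈ W i` for all `i`. -/
def PhotoSpace (F : Type*) [Field F] (r d k n : ℕ) (v : Fin n → (Fin r → F)) :=
  {p : ((Fin r → F) →ₗ[F] (Fin d → F)) × (Fin n → Submodule F (Fin d → F)) //
    (∀ i, Module.finrank F (p.2 i) = k) ∧ ∀ i, p.1 (v i) ∈ p.2 i}

namespace PhotoAux

open Module LinearMap

variable {F : Type*} [Field F]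

/-- Standard form on `F^d`. -/
def dotB (F : Type*) [Field F] (d : ℕ) : LinearMap.BilinForm F (Fin d → F) :=
  LinearMap.mk₂ F (fun x y => x ⬝ᵥ y) (fun a b c => add_dotProduct a b c)
    (fun a b c => smul_dotProduct a b c) (fun a b c => dotProduct_add a b c)
    (fun a b c => dotProduct_smul a b c)

/-- Standard form on `(F^d)^n`. -/
def bigB (F : Type*) [Field F] (n d : ℕ) : LinearMap.BilinForm F (Fin n → Fin d → F) :=
  LinearMap.mk₂ F (fun x y => ∑ i, x i ⬝ᵥ y i)
    (fun a b c => by simp [add_dotProduct, Finset.sum_add_distrib])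
    (fun a b c => by simp [smul_dotProduct, Finset.mul_sum])
    (fun a b c => by simp [dotProduct_add, Finset.sum_add_distrib])
    (fun a b c => by simp [dotProduct_smul, Finset.mul_sum])

lemma dotB_apply (d : ℕ) (x y : Fin d → F) : dotB F d x y = x ⬝ᵥ y := rfl

lemma bigB_apply (n d : ℕ) (x y : Fin n → Fin d → F) :
    bigB F n d x y = ∑ i, x i ⬝ᵥ y i := rfl

lemma dotB_refl (d : ℕ) : (dotB F d).IsRefl := by
  intro x y h
  rw [dotB_apply] at *
  rwa [dotProduct_comm]

lemma bigB_refl (n d : ℕ) : (bigB F n d).IsRefl := by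
  intro x y h
  rw [bigB_apply] at *
  simpa only [dotProduct_comm] using h

lemma dotB_nondeg (d : ℕ) : (dotB F d).Nondegenerate := by
  refine ⟨fun x h => ?_, fun x h => ?_⟩ <;> ext i <;>
    simpa [dotB_apply] using h (Pi.single i 1)

lemma bigB_single (n d : ℕ) (x : Fin n → Fin d → F) (i : Fin n) (y : Fin d → F) :
    bigB F n d x (Pi.single i y) = x i ⬝ᵥ y := by
  rw [bigB_apply, Finset.sum_eq_single i]
  · simp
  · intro j _ hj
    simp [Pi.single_eq_of_ne hj]
  · simp

lemma bigB_single' (n d : ℕ) (x : Fin n → Fin d → F) (i : Fin n) (y : Fin d → F) :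
    bigB F n d (Pi.single i y) x = y ⬝ᵥ x i := by
  rw [bigB_apply, Finset.sum_eq_single i]
  · simp
  · intro j _ hj
    simp [Pi.single_eq_of_ne hj]
  · simp

lemma bigB_nondeg (n d : ℕ) : (bigB F n d).Nondegenerate := by
  refine ⟨fun x h => ?_, fun x h => ?_⟩ <;> ext i j <;>
    simpa [bigB_single, bigB_single'] using h (Pi.single i (Pi.single j 1))

lemma orth_pi (n d : ℕ) (W : Fin n → Submodule F (Fin d → F)) :
    (bigB F n d).orthogonal (Submodule.pi Set.univ W) =
      Submodule.pi Set.univ (fun i => (dotB F d).orthogonal (W i)) := by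
  ext x
  simp only [LinearMap.BilinForm.mem_orthogonal_iff, Submodule.mem_pi, Set.mem_univ, true_imp_iff]
  constructor
  · intro h i y hy
    have := h (Pi.single i y) (fun j => by
      by_cases hj : j = i
      · subst hj; simpa using hy
      · simp [Pi.single_eq_of_ne hj])
    rwa [bigB_single'] at this
  · intro h y hy
    rw [bigB_apply]
    exact Finset.sum_eq_zero fun i _ => h i (y i) (hy i)

lemma orth_sup {M : Type*} [AddCommGroup M] [Module F M] (B : LinearMap.BilinForm F M)
    (C U : Submodule F M) : B.orthogonal (C ⊔ U) = B.orthogonal C ⊓ B.orthogonal U := by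
  apply le_antisymm
  · exact le_inf (LinearMap.BilinForm.orthogonal_le le_sup_left)
      (LinearMap.BilinForm.orthogonal_le le_sup_right)
  · rintro x ⟨h1, h2⟩ y hy
    obtain ⟨c, hc, u, hu, rfl⟩ := Submodule.mem_sup.1 hy
    have e1 : B c x = 0 := h1 c hc
    have e2 : B u x = 0 := h2 u hu
    change B (c + u) x = 0
    simp [e1, e2]

lemma finrank_pi_sub (n d k : ℕ) (W : Fin n → Submodule F (Fin d → F))
    (hW : ∀ i, finrank F (W i) = k) :
    finrank F (Submodule.pi Set.univ W : Submodule F (Fin n → Fin d → F)) = k * n := by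
  let e : (Submodule.pi Set.univ W : Submodule F (Fin n → Fin d → F)) ≃ₗ[F] (∀ i, W i) :=
    { toFun := fun x i => ⟨x.1 i, x.2 i trivial⟩
      invFun := fun y => ⟨fun i => (y i).1, fun i _ => (y i).2⟩
      map_add' := fun _ _ => rfl
      map_smul' := fun _ _ => rfl
      left_inv := fun _ => rfl
      right_inv := fun _ => rfl }
  rw [e.finrank_eq, finrank_pi_fintype]
  simp [hW, mul_comm]

/-- Evaluation of `φ` at the columns. -/
def ev {r n : ℕ} (d : ℕ) (V : Matrix (Fin r) (Fin n) F) :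
    ((Fin r → F) →ₗ[F] (Fin d → F)) →ₗ[F] (Fin n → Fin d → F) :=
  LinearMap.pi fun i => LinearMap.applyₗ (fun t => V t i)

lemma ev_apply {r n : ℕ} (d : ℕ) (V : Matrix (Fin r) (Fin n) F)
    (φ : (Fin r → F) →ₗ[F] (Fin d → F)) (i : Fin n) :
    ev d V φ i = φ (fun t => V t i) := rfl

lemma ev_inj {r n : ℕ} (d : ℕ) (V : Matrix (Fin r) (Fin n) F) (hV : V.rank = r) :
    Function.Injective (ev d V) := by
  have hs : Submodule.span F (Set.range V.col) = ⊤ := by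
    apply Submodule.eq_top_of_finrank_eq
    rw [← Matrix.rank_eq_finrank_span_cols, hV]; simp
  intro φ ψ h
  apply LinearMap.ext_on hs
  rintro _ ⟨i, rfl⟩
  exact congrFun h i

lemma ev_eq {r n : ℕ} (d : ℕ) (V : Matrix (Fin r) (Fin n) F)
    (φ : (Fin r → F) →ₗ[F] (Fin d → F)) (i : Fin n) :
    ev d V φ i = ∑ t, V t i • φ (Pi.single t 1) := by
  rw [ev_apply, LinearMap.pi_apply_eq_sum_univ]
  congr! 3 with t
  ext j
  simp [Pi.single_apply, eq_comm]

lemma finrank_range_ev {r n : ℕ} (d : ℕ) (V : Matrix (Fin r) (Fin n) F) (hV : V.rank = r) :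
    finrank F (LinearMap.range (ev d V)) = d * r := by
  rw [LinearMap.finrank_range_of_inj (ev_inj d V hV), Module.finrank_linearMap]
  simp [mul_comm]

lemma ev_orth {r s n : ℕ} (d : ℕ) (V : Matrix (Fin r) (Fin n) F) (Vs : Matrix (Fin s) (Fin n) F)
    (horth : V * Vs.transpose = 0) (φ : (Fin r → F) →ₗ[F] (Fin d → F))
    (ψ : (Fin s → F) →ₗ[F] (Fin d → F)) : bigB F n d (ev d V φ) (ev d Vs ψ) = 0 := by
  have h : ∀ t u, ∑ i, V t i * Vs u i = 0 := fun t u => by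
    simpa [Matrix.mul_apply] using congrFun (congrFun horth t) u
  rw [bigB_apply]
  simp only [ev_eq, sum_dotProduct, dotProduct_sum, smul_dotProduct, dotProduct_smul, smul_eq_mul,
    Finset.mul_sum]
  rw [Finset.sum_comm]
  refine Finset.sum_eq_zero fun t _ => ?_
  rw [Finset.sum_comm]
  refine Finset.sum_eq_zero fun u _ => ?_
  simp only [← mul_assoc]
  rw [← Finset.sum_mul]
  simp only [mul_comm (Vs _ _), h, zero_mul]

lemma range_orth {r n : ℕ} (d : ℕ) (V : Matrix (Fin r) (Fin n) F)
    (Vs : Matrix (Fin (n - r)) (Fin n) F)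
    (hV : V.rank = r) (hVs : Vs.rank = n - r) (horth : V * Vs.transpose = 0) :
    (bigB F n d).orthogonal (LinearMap.range (ev d V)) = LinearMap.range (ev d Vs) := by
  symm
  apply Submodule.eq_of_le_of_finrank_eq
  · rintro _ ⟨ψ, rfl⟩ _ ⟨φ, rfl⟩
    exact ev_orth d V Vs horth φ ψ
  · rw [LinearMap.BilinForm.finrank_orthogonal (bigB_nondeg n d), finrank_range_ev d V hV,
      finrank_range_ev d Vs hVs]
    simp [finrank_pi_fintype, Nat.mul_sub, mul_comm]

/-- The linear space of photos with given `W`. -/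
def S {r n : ℕ} (d : ℕ) (V : Matrix (Fin r) (Fin n) F) (W : Fin n → Submodule F (Fin d → F)) :
    Submodule F ((Fin r → F) →ₗ[F] (Fin d → F)) :=
  (Submodule.pi Set.univ W).comap (ev d V)

lemma finrank_S {r n : ℕ} (d : ℕ) (V : Matrix (Fin r) (Fin n) F) (hV : V.rank = r)
    (W : Fin n → Submodule F (Fin d → F)) :
    finrank F (S d V W) =
      finrank F (LinearMap.range (ev d V) ⊓ Submodule.pi Set.univ W : Submodule F _) := by
  rw [← Submodule.map_comap_eq]
  exact (Submodule.equivMapOfInjective (ev d V) (ev_inj d V hV) (S d V W)).finrank_eq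

lemma finrank_main {r n d k : ℕ} (hkd : k < d) (V : Matrix (Fin r) (Fin n) F)
    (Vs : Matrix (Fin (n - r)) (Fin n) F)
    (hV : V.rank = r) (hVs : Vs.rank = n - r) (horth : V * Vs.transpose = 0)
    (W : Fin n → Submodule F (Fin d → F)) (hW : ∀ i, finrank F (W i) = k) :
    d * r + finrank F (S d Vs fun i => (dotB F d).orthogonal (W i)) =
      (d - k) * n + finrank F (S d V W) := by
  rw [finrank_S d V hV, finrank_S d Vs hVs, ← range_orth d V Vs hV hVs horth, ← orth_pi,
    ← orth_sup, LinearMap.BilinForm.finrank_orthogonal (bigB_nondeg n d)]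
  have h1 := Submodule.finrank_sup_add_finrank_inf_eq (LinearMap.range (ev d V))
    (Submodule.pi Set.univ W)
  rw [finrank_range_ev d V hV, finrank_pi_sub n d k W hW] at h1
  have h2 := Submodule.finrank_le (LinearMap.range (ev d V) ⊔ Submodule.pi Set.univ W)
  have h3 : finrank F (Fin n → Fin d → F) = d * n := by
    simp [finrank_pi_fintype, mul_comm]
  rw [h3] at h2 ⊢
  have h4 : k * n ≤ d * n := Nat.mul_le_mul_right n hkd.le
  rw [Nat.sub_mul]
  omega

/-- Tuples of subspaces of fixed dimension. -/
abbrev Gr (F : Type*) [Field F] (d k n : ℕ) :=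
  {W : Fin n → Submodule F (Fin d → F) // ∀ i, finrank F (W i) = k}

/-- Photos as a sigma type. -/
def photoEquiv {r n : ℕ} (d k : ℕ) (V : Matrix (Fin r) (Fin n) F) :
    PhotoSpace F r d k n (fun i t => V t i) ≃ Σ W : Gr F d k n, S d V W.1 where
  toFun p := ⟨⟨p.1.2, p.2.1⟩, ⟨p.1.1, fun i _ => p.2.2 i⟩⟩
  invFun q := ⟨(q.2.1, q.1.1), q.1.2, fun i => q.2.2 i trivial⟩
  left_inv _ := rfl
  right_inv _ := rfl

/-- Orthogonal complement of tuples. -/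
def grEquiv {d k : ℕ} (n : ℕ) (hkd : k < d) : Gr F d k n ≃ Gr F d (d - k) n where
  toFun W := ⟨fun i => (dotB F d).orthogonal (W.1 i), fun i => by
    rw [LinearMap.BilinForm.finrank_orthogonal (dotB_nondeg d), W.2 i]; simp⟩
  invFun W := ⟨fun i => (dotB F d).orthogonal (W.1 i), fun i => by
    rw [LinearMap.BilinForm.finrank_orthogonal (dotB_nondeg d), W.2 i]; simp; omega⟩
  left_inv W := Subtype.ext <| funext fun i =>
    LinearMap.BilinForm.orthogonal_orthogonal (dotB_nondeg d) (dotB_refl d) _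
  right_inv W := Subtype.ext <| funext fun i =>
    LinearMap.BilinForm.orthogonal_orthogonal (dotB_nondeg d) (dotB_refl d) _

lemma card_photo [Fintype F] {r n : ℕ} (d k : ℕ) (V : Matrix (Fin r) (Fin n) F)
    [Fintype (Gr F d k n)] :
    Nat.card (PhotoSpace F r d k n (fun i t => V t i)) =
      ∑ W : Gr F d k n, Fintype.card F ^ finrank F (S d V W.1) := by
  have : Finite ((Fin r → F) →ₗ[F] (Fin d → F)) := Module.finite_of_finite F
  rw [Nat.card_congr (photoEquiv d k V), Nat.card_sigma]
  refine Finset.sum_congr rfl fun W _ => ?_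
  rw [Module.natCard_eq_pow_finrank (K := F), Nat.card_eq_fintype_card]

end PhotoAux

/-- **Corollary (photo-counting symmetry between a matroid and its dual).**
Let `F` be a finite field with `q` elements, `0 < k < d`, `d ≥ 2`.  Let `V` be an
`r × n` matrix over `F` of rank `r` and `V*` an `(n-r) × n` matrix of rank `n-r`
with `V ⬝ (V*)ᵀ = 0` (so the row space of `V*` is the null space of `V`).  If `M`
is the matroid represented by the columns of `V` and `M^⊥` the dual matroid
represented by the columns of `V*`, then
`q^{d·r} · |X_{d-k,d}(M^⊥)| = q^{(d-k)·n} · |X_{k,d}(M)|`. -/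
theorem photo_count_duality (F : Type*) [Field F] [Fintype F] (r d k n : ℕ)
    (hd : 2 ≤ d) (hk : 0 < k) (hkd : k < d)
    (V : Matrix (Fin r) (Fin n) F) (Vs : Matrix (Fin (n - r)) (Fin n) F)
    (hV : V.rank = r) (hVs : Vs.rank = n - r) (horth : V * Vs.transpose = 0) :
    (Fintype.card F) ^ (d * r) *
        Nat.card (PhotoSpace F (n - r) d (d - k) n (fun i t => Vs t i)) =
      (Fintype.card F) ^ ((d - k) * n) *
        Nat.card (PhotoSpace F r d k n (fun i t => V t i)) := by
  classical
  have : Finite (Submodule F (Fin d → F)) := inferInstance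
  have : Fintype (PhotoAux.Gr F d k n) := Fintype.ofFinite _
  have : Fintype (PhotoAux.Gr F d (d - k) n) := Fintype.ofFinite _
  rw [PhotoAux.card_photo, PhotoAux.card_photo, Finset.mul_sum, Finset.mul_sum,
    ← (PhotoAux.grEquiv n hkd).sum_comp]
  refine Finset.sum_congr rfl fun W _ => ?_
  rw [← pow_add, ← pow_add]
  congr 1
  exact PhotoAux.finrank_main hkd V Vs hV hVs horth W.1 W.2
end

section
/- (Nesting Theorem, inclusion R^d(M) ⊆ L^d(M).) Let F be a field, d ≥ 2 an integer, and v_1, …, v_n ∈ F^r. If A ⊆ {1,…,n} is d-rigidity independent, then for every nonempty subset A' ⊆ A one has d · dim_F span{v_i : i ∈ A'} > |A'| (that is, A is d-Laman independent for the matroid represented by the v_i). -/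
open scoped TensorProduct

/-- The field `K = F(Φ)` of rational functions over `F` in the `d·r` entries
`Φ_{st}` of a generic `d × r` matrix. -/
abbrev GenericField (F : Type*) [Field F] (d r : ℕ) : Type _ :=
  FractionRing (MvPolynomial (Fin d × Fin r) F)

/-- The rigidity vector `w ⊗ Φ(w) ∈ K^r ⊗_K K^d` attached to a vector
`w ∈ F^r`, where `Φ : K^r → K^d` is the generic linear map with matrix entries
the indeterminates `Φ_{st}`, so that `Φ(w) s = Σ_t Φ_{st} · w t`. -/
noncomputable def rigidityVec (F : Type*) [Field F] (d r : ℕ) (w : Fin r → F) :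
    TensorProduct (GenericField F d r)
      (Fin r → GenericField F d r) (Fin d → GenericField F d r) :=
  (fun t => algebraMap (MvPolynomial (Fin d × Fin r) F) (GenericField F d r)
      (MvPolynomial.C (w t))) ⊗ₜ[GenericField F d r]
    (fun s => ∑ t, algebraMap (MvPolynomial (Fin d × Fin r) F) (GenericField F d r)
      (MvPolynomial.X (s, t) * MvPolynomial.C (w t)))

/-- A subset `A ⊆ {1,…,n}` is `d`-rigidity independent (with respect to the
representing vectors `v : Fin n → F^r`) if the vectors
`{v i ⊗ Φ(v i) : i ∈ A} ⊆ K^r ⊗_K K^d` are `K`-linearly independent, where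
`K = F(Φ)` and `Φ` is the generic `d × r` matrix. -/
def RigidityIndep (F : Type*) [Field F] (d r n : ℕ) (v : Fin n → (Fin r → F))
    (A : Set (Fin n)) : Prop :=
  LinearIndependent (GenericField F d r) (fun i : A => rigidityVec F d r (v i))

lemma rigidity_aux {F K V E : Type*} [Field F] [Field K] [Algebra F K]
    [AddCommGroup V] [Module F V] [AddCommGroup E] [Module K E] [Module F E]
    [IsScalarTower F K E] (d : ℕ)
    (Φ : E →ₗ[K] (Fin d → K)) (f : V →ₗ[F] E) (W : Submodule F V)
    [FiniteDimensional F W] (s0 s1 : Fin d) (hs : s0 ≠ s1) (w0 : V) (hw0 : w0 ∈ W)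
    (hne : Φ (f w0) s0 ≠ 0) {ι : Type*} [Fintype ι] (u : ι → V) (hu : ∀ i, u i ∈ W)
    (hli : LinearIndependent K (fun i => f (u i) ⊗ₜ[K] Φ (f (u i)))) :
    Fintype.card ι < d * Module.finrank F W := by
  classical
  let b := Module.finBasis F W
  let g : Fin d × Fin (Module.finrank F W) → E ⊗[K] (Fin d → K) :=
    fun p => f (b p.2 : V) ⊗ₜ[K] Pi.single p.1 (1 : K)
  let U := Submodule.span K (Set.range g)
  have hUfin : FiniteDimensional K U := FiniteDimensional.span_of_finite K (Set.finite_range g)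
  have hU : Module.finrank K U ≤ d * Module.finrank F W := by
    have := finrank_range_le_card (R := K) g
    simpa [Set.finrank, U] using this
  have hmem : ∀ w ∈ W, ∀ y : Fin d → K, f w ⊗ₜ[K] y ∈ U := by
    intro w hw y
    have h1 : f w = ∑ j, algebraMap F K (b.repr ⟨w, hw⟩ j) • f (b j : V) := by
      have := congrArg (fun z : W => f (z : V)) (b.sum_repr ⟨w, hw⟩)
      rw [← this]
      simp only [Submodule.coe_sum, Submodule.coe_smul, map_sum, map_smul, algebraMap_smul]
    have h2 : y = ∑ s, y s • (Pi.single s (1 : K) : Fin d → K) := by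
      simpa using pi_eq_sum_univ' y
    rw [h1, h2, TensorProduct.sum_tmul]
    refine Submodule.sum_mem _ fun j _ => ?_
    rw [TensorProduct.tmul_sum]
    refine Submodule.sum_mem _ fun s _ => ?_
    rw [TensorProduct.tmul_smul]
    refine Submodule.smul_mem _ _ ?_
    rw [← TensorProduct.smul_tmul']
    exact Submodule.smul_mem _ _ (Submodule.subset_span ⟨(s, j), rfl⟩)
  let p (s : Fin d) : (Fin d → K) →ₗ[K] K := LinearMap.proj s
  let B : E →ₗ[K] (Fin d → K) →ₗ[K] K :=
    (LinearMap.mul K K).compl₁₂ (p s0 ∘ₗ Φ) (p s1) - (LinearMap.mul K K).compl₁₂ (p s1 ∘ₗ Φ) (p s0)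
  let L := TensorProduct.lift B
  have hL : ∀ x y, L (x ⊗ₜ y) = Φ x s0 * y s1 - Φ x s1 * y s0 := by
    intro x y; simp [L, B, p]
  let S := Submodule.span K (Set.range (fun i => f (u i) ⊗ₜ[K] Φ (f (u i))))
  have hS : Module.finrank K S = Fintype.card ι := finrank_span_eq_card hli
  rw [← hS]
  refine lt_of_lt_of_le (Submodule.finrank_lt_finrank_of_lt ?_) hU
  refine lt_of_le_of_ne ?_ ?_
  · refine Submodule.span_le.2 ?_
    rintro _ ⟨i, rfl⟩
    exact hmem _ (hu i) _
  · intro h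
    have h1 : S ≤ LinearMap.ker L := by
      refine Submodule.span_le.2 ?_
      rintro _ ⟨i, rfl⟩
      simp only [SetLike.mem_coe, LinearMap.mem_ker, hL]
      ring
    have h2 := hmem w0 hw0 (Pi.single s1 (1 : K))
    change S = U at h
    rw [← h] at h2
    have h3 := h1 h2
    rw [LinearMap.mem_ker, hL] at h3
    simp [hs] at h3
    exact hne h3

/-- **Nesting Theorem, inclusion `R^d(M) ⊆ L^d(M)`.**
Let `F` be a field, `d ≥ 2` an integer, and `v 1, …, v n ∈ F^r`.  If
`A ⊆ {1,…,n}` is `d`-rigidity independent, then `A` is `d`-Laman independent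
for the matroid represented by the `v i`: for every nonempty `A' ⊆ A`,
`d · dim span{v i : i ∈ A'} > |A'|`. -/
theorem rigidity_subset_laman (F : Type*) [Field F] (d r n : ℕ) (hd : 2 ≤ d)
    (v : Fin n → (Fin r → F)) (A : Set (Fin n))
    (hA : RigidityIndep F d r n v A) :
    ∀ A' ⊆ A, A'.Nonempty →
      A'.ncard < d * Module.finrank F (Submodule.span F (v '' A')) := by
  classical
  intro A' hA' ⟨i0, hi0⟩
  let K := GenericField F d r
  let f : (Fin r → F) →ₗ[F] (Fin r → K) := (Algebra.linearMap F K).compLeft (Fin r)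
  let Φ : (Fin r → K) →ₗ[K] (Fin d → K) := Matrix.mulVecLin
    (Matrix.of fun s t => algebraMap (MvPolynomial (Fin d × Fin r) F) K (MvPolynomial.X (s, t)))
  have hf : ∀ w t, f w t = algebraMap (MvPolynomial (Fin d × Fin r) F) K
      (MvPolynomial.C (w t)) := fun w t =>
    IsScalarTower.algebraMap_apply F (MvPolynomial (Fin d × Fin r) F) K (w t)
  have hΦ : ∀ w s, Φ (f w) s = algebraMap (MvPolynomial (Fin d × Fin r) F) K
      (∑ t, MvPolynomial.X (s, t) * MvPolynomial.C (w t)) := by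
    intro w s
    simp only [Φ, Matrix.mulVecLin_apply, Matrix.mulVec, dotProduct, Matrix.of_apply, hf,
      map_sum, map_mul]
  have hrig : ∀ w, rigidityVec F d r w = f w ⊗ₜ[K] Φ (f w) := by
    intro w
    unfold rigidityVec
    congr 1
    funext s
    rw [hΦ, map_sum]
  have hv0 : v i0 ≠ 0 := by
    intro h0
    have := hA.ne_zero ⟨i0, hA' hi0⟩
    apply this
    change rigidityVec F d r (v i0) = 0
    rw [hrig, h0]
    simp
  have hne : Φ (f (v i0)) ⟨0, by omega⟩ ≠ 0 := by
    rw [hΦ]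
    intro h
    rw [map_eq_zero_iff _ (IsFractionRing.injective (MvPolynomial (Fin d × Fin r) F) K)] at h
    apply hv0
    funext t
    have := congrArg (MvPolynomial.eval (fun p : Fin d × Fin r => if p.2 = t then (1 : F) else 0)) h
    simpa using this
  have hli : LinearIndependent K (fun i : A' => f (v i) ⊗ₜ[K] Φ (f (v i))) := by
    have := hA.comp (Set.inclusion hA') (Set.inclusion_injective hA')
    refine Eq.mp ?_ this
    congr 1
    funext i
    exact hrig _
  have := rigidity_aux d Φ f (Submodule.span F (v '' A')) ⟨0, by omega⟩ ⟨1, by omega⟩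
    (by simp) (v i0) (Submodule.subset_span ⟨i0, hi0, rfl⟩) hne (fun i : A' => v i)
    (fun i => Submodule.subset_span ⟨i, i.2, rfl⟩) hli
  rwa [← Nat.card_coe_set_eq, Nat.card_eq_fintype_card]
end

section
/- Let F be a field, let v_1, …, v_n ∈ F^r, and suppose there is a partition {1,…,n} = I_1 ⊔ I_2 ⊔ … ⊔ I_d such that for each j = 1,…,d the family {v_i : i ∈ I_j} is F-linearly independent. Let K = F(x) be the field of rational functions over F in the n·d indeterminates x_{ij} (1 ≤ i ≤ n, 1 ≤ j ≤ d), and for each i let x^{(i)} = (x_{i1}, …, x_{id}) ∈ K^d. Then the n vectors v_i ⊗ x^{(i)} ∈ K^r ⊗_K K^d (with v_i regarded in K^r) are K-linearly independent. -/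
open scoped TensorProduct

/-- The field `K = F(x)` of rational functions over `F` in the `n·d`
indeterminates `x_{ij}`. -/
abbrev MarkField (F : Type*) [Field F] (n d : ℕ) : Type _ :=
  FractionRing (MvPolynomial (Fin n × Fin d) F)

/-- The vector `v i ⊗ x^{(i)} ∈ K^r ⊗_K K^d`, where
`x^{(i)} = (x_{i1}, …, x_{id})` is the `i`-th fully generic marking vector. -/
noncomputable def markedVec (F : Type*) [Field F] (n d r : ℕ)
    (v : Fin n → (Fin r → F)) (i : Fin n) :
    TensorProduct (MarkField F n d) (Fin r → MarkField F n d) (Fin d → MarkField F n d) :=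
  (fun t => algebraMap (MvPolynomial (Fin n × Fin d) F) (MarkField F n d)
      (MvPolynomial.C (v i t))) ⊗ₜ[MarkField F n d]
    (fun s => algebraMap (MvPolynomial (Fin n × Fin d) F) (MarkField F n d)
      (MvPolynomial.X (i, s)))

/-- A finite linearly independent family of coordinate vectors has a right inverse matrix. -/
theorem exists_rightInverse_of_rows {F : Type*} [Field F] {ι κ : Type*} [Fintype ι] [Fintype κ]
    [DecidableEq ι] [DecidableEq κ] (A : Matrix ι κ F)
    (hA : ∀ c : ι → F, Matrix.vecMul c A = 0 → c = 0) :
    ∃ B : Matrix κ ι F, A * B = 1 := by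
  obtain ⟨g, hg⟩ := LinearMap.exists_leftInverse_of_injective (Matrix.vecMulLinear A)
    (LinearMap.ker_eq_bot'.2 fun c hc => hA c (by simpa using hc))
  refine ⟨Matrix.of fun k i => g (Pi.single k 1) i, ?_⟩
  ext i j
  have h1 : g (A i) = Pi.single i 1 := by
    have := LinearMap.congr_fun hg (Pi.single i 1)
    simpa [Matrix.row] using this
  have h2 : g (A i) = ∑ k, A i k • g (Pi.single k 1) := by
    conv_lhs => rw [pi_eq_sum_univ' (A i)]
    simp only [map_sum, map_smul]
  have h3 := congrFun (h2.symm.trans h1) j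
  rw [Matrix.mul_apply, Matrix.one_apply]
  simpa [Pi.single_apply, eq_comm] using h3

/-- **Key claim in the proof of the Nesting Theorem.**
Let `F` be a field and `v 1, …, v n ∈ F^r`.  Suppose `{1,…,n}` is partitioned
into sets `I 0 ⊔ ⋯ ⊔ I (d-1)` such that each family `{v i : i ∈ I j}` is
`F`-linearly independent (an Edmonds decomposition).  Then the `n` vectors
`v i ⊗ x^{(i)} ∈ K^r ⊗_K K^d`, with fully generic markings
`x^{(i)} = (x_{i1}, …, x_{id})` over `K = F(x_{11}, …, x_{nd})`, are
`K`-linearly independent. -/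
theorem edmonds_generic_markings_linearIndependent
    (F : Type*) [Field F] (d r n : ℕ) (v : Fin n → (Fin r → F))
    (I : Fin d → Set (Fin n))
    (hcover : (⋃ j, I j) = Set.univ)
    (hdisj : Pairwise fun j j' => Disjoint (I j) (I j'))
    (hindep : ∀ j, LinearIndependent F (fun i : I j => v i)) :
    LinearIndependent (MarkField F n d) (markedVec F n d r v) := by
  classical
  let A : Matrix (Fin n) (Fin r × Fin d) F :=
    Matrix.of fun i p => v i p.1 * (if i ∈ I p.2 then 1 else 0)
  obtain ⟨B, hB⟩ := exists_rightInverse_of_rows A (by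
    intro c hc
    funext i
    obtain ⟨j, hj⟩ : ∃ j, i ∈ I j := by
      have : i ∈ ⋃ j, I j := hcover ▸ Set.mem_univ i
      simpa using this
    have h := Fintype.linearIndependent_iff.1 (hindep j) (fun i => c i) (by
      funext t
      have h := congrFun hc (t, j)
      simp only [Matrix.vecMul, dotProduct, A, Matrix.of_apply, Pi.zero_apply] at h
      simp only [Finset.sum_apply, Pi.smul_apply, smul_eq_mul, Pi.zero_apply]
      rw [← h, ← Finset.sum_subtype (Finset.univ.filter (· ∈ I j)) (by simp)
        (fun i => c i * v i t), Finset.sum_filter]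
      refine Finset.sum_congr rfl fun k _ => ?_
      split_ifs <;> simp)
    exact h ⟨i, hj⟩)
  let M : Matrix (Fin n) (Fin r × Fin d) (MvPolynomial (Fin n × Fin d) F) :=
    Matrix.of fun i p => MvPolynomial.C (v i p.1) * MvPolynomial.X (i, p.2)
  let φ : MvPolynomial (Fin n × Fin d) F →+* F := (MvPolynomial.aeval (R := F)
    (fun q : Fin n × Fin d => if q.1 ∈ I q.2 then (1 : F) else 0)).toRingHom
  let B' : Matrix (Fin r × Fin d) (Fin n) (MvPolynomial (Fin n × Fin d) F) :=
    B.map MvPolynomial.C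
  let N : Matrix (Fin n) (Fin n) (MvPolynomial (Fin n × Fin d) F) := M * B'
  have hN : N.map φ = 1 := by
    rw [← hB]
    simp only [N, Matrix.map_mul]
    congr 1
    · ext i p
      simp [M, A, φ]
    · ext i p
      simp [φ, B']
  have hdet : N.det ≠ 0 := by
    intro h
    have h2 : φ N.det = (N.map φ).det := RingHom.map_det φ N
    rw [h, hN] at h2
    simp at h2
  let a : MvPolynomial (Fin n × Fin d) F →+* MarkField F n d := algebraMap (MvPolynomial (Fin n × Fin d) F) (MarkField F n d)
  have ha : Function.Injective a := IsFractionRing.injective (MvPolynomial (Fin n × Fin d) F) (MarkField F n d)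
  have hdet' : (N.map a).det ≠ 0 := by
    have h2 : a N.det = (N.map a).det := RingHom.map_det a N
    rw [← h2]
    exact fun h => hdet (ha (h.trans (map_zero a).symm))
  rw [Fintype.linearIndependent_iff]
  intro c hc
  have key : Matrix.vecMul c (M.map a) = 0 := by
    funext p
    let f : TensorProduct (MarkField F n d) (Fin r → MarkField F n d)
        (Fin d → MarkField F n d) →ₗ[MarkField F n d] MarkField F n d :=
      TensorProduct.lift ((LinearMap.mul (MarkField F n d) (MarkField F n d)).compl₁₂
        (LinearMap.proj p.1) (LinearMap.proj p.2))
    have h := congrArg f hc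
    simp only [map_sum, map_smul, map_zero] at h
    rw [Pi.zero_apply, ← h]
    simp only [Matrix.vecMul, dotProduct]
    refine Finset.sum_congr rfl fun i _ => ?_
    simp [f, markedVec, M, a]
  have hz : Matrix.vecMul c (N.map a) = 0 := by
    simp only [N, Matrix.map_mul]
    rw [← Matrix.vecMul_vecMul, key, Matrix.zero_vecMul]
  have := Matrix.eq_zero_of_vecMul_eq_zero hdet' hz
  intro i
  rw [this]; rfl
end

section
/- (Generalized Laman theorem: R²(M) = L²(M).) Let F be a field and v_1, …, v_n ∈ F^r. Then a subset A ⊆ {1,…,n} is 2-rigidity independent if and only if for every nonempty subset A' ⊆ A one has 2 · dim_F span{v_i : i ∈ A'} > |A'|. -/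
open scoped TensorProduct

open Module in
theorem lam_spec {R L : Type*} [CommRing R] [IsDomain R] [Field L] (φ : R →+* L)
    {ι κ : Type*} [Fintype ι] [Fintype κ] (M : ι → κ → R)
    (h : LinearIndependent L (fun i k => φ (M i k))) :
    LinearIndependent (FractionRing R)
      (fun i k => algebraMap R (FractionRing R) (M i k)) := by
  classical
  let A : Matrix ι κ L := Matrix.of (fun i k => φ (M i k))
  have hr : A.rank = Fintype.card ι := LinearIndependent.rank_matrix (M := A) h
  rw [Matrix.rank_eq_finrank_span_cols] at hr
  obtain ⟨f, hf, -, hfi⟩ := Submodule.exists_fun_fin_finrank_span_eq L (Set.range A.col)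
  choose g hg using hf
  let e : ι ≃ Fin (finrank L (Submodule.span L (Set.range A.col))) :=
    (Fintype.equivFinOfCardEq hr.symm)
  let M' : Matrix ι ι R := Matrix.of (fun i j => M i (g (e j)))
  have h1 : (M'.map φ).det ≠ 0 := by
    have : LinearIndependent L (M'.map φ).col := by
      have h2 : (M'.map φ).col = f ∘ e := by
        funext j
        rw [Function.comp, ← hg]
        rfl
      rw [h2]
      exact hfi.comp _ e.injective
    rw [Matrix.linearIndependent_cols_iff_isUnit, Matrix.isUnit_iff_isUnit_det] at this
    exact this.ne_zero
  have h2 : M'.det ≠ 0 := by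
    intro h0
    apply h1
    have := RingHom.map_det φ M'
    rw [h0, map_zero] at this
    exact this.symm
  have h3 : LinearIndependent (FractionRing R) (M'.map (algebraMap R (FractionRing R))).row := by
    rw [Matrix.linearIndependent_rows_iff_isUnit, Matrix.isUnit_iff_isUnit_det]
    have := RingHom.map_det (algebraMap R (FractionRing R)) M'
    rw [isUnit_iff_ne_zero]
    change ((algebraMap R (FractionRing R)).mapMatrix M').det ≠ 0
    rw [← this]
    exact (map_ne_zero_iff _ (IsFractionRing.injective R (FractionRing R))).2 h2
  exact LinearIndependent.of_comp (LinearMap.funLeft (FractionRing R) (FractionRing R) (g ∘ e)) h3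

open Module in
theorem lam_rado {F V : Type*} [Field F] [AddCommGroup V] [Module F V] [FiniteDimensional F V]
    {ι : Type*} [Fintype ι] [DecidableEq ι] (N : ℕ) : ∀ (W : ι → Submodule F V),
    ∑ i, finrank F (W i) = N → (∀ s : Finset ι, s.card ≤ finrank F (s.sup W : Submodule F V)) →
    ∃ x : ι → V, (∀ i, x i ∈ W i) ∧ LinearIndependent F x := by
  induction N using Nat.strong_induction_on with
  | _ N ih =>
  intro W hN hW
  by_cases hj : ∃ j, 2 ≤ finrank F (W j)
  · obtain ⟨j, hj⟩ := hj
    have key : ∀ U : Submodule F V, U < W j →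
        (∀ s : Finset ι, s.card ≤ finrank F (s.sup (Function.update W j U) : Submodule F V)) →
        ∃ x : ι → V, (∀ i, x i ∈ W i) ∧ LinearIndependent F x := by
      intro U hU hs
      have hle : ∀ i, Function.update W j U i ≤ W i := by
        intro i
        by_cases h : i = j
        · subst h; simpa using hU.le
        · simp [h]
      obtain ⟨x, hx, hxi⟩ := ih (∑ i, finrank F (Function.update W j U i)) (by
        rw [← hN]
        apply Finset.sum_lt_sum
        · intro i _
          exact Submodule.finrank_mono (hle i)
        · refine ⟨j, Finset.mem_univ _, ?_⟩
          rw [Function.update_self]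
          exact Submodule.finrank_lt_finrank_of_lt hU) _ rfl hs
      exact ⟨x, fun i => hle i (hx i), hxi⟩
    have hne : W j ≠ ⊥ := by
      intro h; rw [h] at hj; simp at hj
    obtain ⟨x, hxW, hx0⟩ := Submodule.exists_mem_ne_zero_of_ne_bot hne
    obtain ⟨Q, hQ⟩ := Submodule.exists_isCompl (F ∙ x)
    have hxle : (F ∙ x) ≤ W j := by simpa using hxW
    have hU1 : (F ∙ x) < W j := by
      refine lt_of_le_of_ne hxle ?_
      intro h
      rw [← h, finrank_span_singleton hx0] at hj
      omega
    have hU2 : Q ⊓ W j < W j := by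
      refine lt_of_le_of_ne inf_le_right ?_
      intro h
      have hxQ : x ∈ Q := by
        have : x ∈ Q ⊓ W j := by rw [h]; exact hxW
        exact this.1
      have := Submodule.disjoint_def.1 hQ.disjoint x (Submodule.mem_span_singleton_self x) hxQ
      exact hx0 this
    have hsup : (F ∙ x) ⊔ (Q ⊓ W j) = W j := by
      rw [← sup_inf_assoc_of_le _ hxle, hQ.sup_eq_top, top_inf_eq]
    by_cases c1 : ∀ s : Finset ι, s.card ≤
        finrank F (s.sup (Function.update W j (F ∙ x)) : Submodule F V)
    · exact key _ hU1 c1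
    by_cases c2 : ∀ s : Finset ι, s.card ≤
        finrank F (s.sup (Function.update W j (Q ⊓ W j)) : Submodule F V)
    · exact key _ hU2 c2
    exfalso
    push Not at c1 c2
    obtain ⟨s, hs⟩ := c1
    obtain ⟨t, ht⟩ := c2
    have hmem : ∀ (U : Submodule F V) (s : Finset ι),
        finrank F (s.sup (Function.update W j U) : Submodule F V) < s.card → j ∈ s := by
      intro U s hs
      by_contra hjs
      have : s.sup (Function.update W j U) = s.sup W := by
        apply Finset.sup_congr rfl
        intro i hi
        rw [Function.update_of_ne]
        rintro rfl
        exact hjs hi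
      rw [this] at hs
      exact absurd (hW s) (by omega)
    have hjs := hmem _ _ hs
    have hjt := hmem _ _ ht
    set X := s.sup (Function.update W j (F ∙ x)) with hX
    set Y := t.sup (Function.update W j (Q ⊓ W j)) with hY
    have hleX : ∀ i ∈ s, i ≠ j → W i ≤ X := by
      intro i hi hij
      have := Finset.le_sup (f := Function.update W j (F ∙ x)) hi
      rwa [Function.update_of_ne hij] at this
    have hleY : ∀ i ∈ t, i ≠ j → W i ≤ Y := by
      intro i hi hij
      have := Finset.le_sup (f := Function.update W j (Q ⊓ W j)) hi
      rwa [Function.update_of_ne hij] at this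
    have hjX : (F ∙ x) ≤ X := by
      have := Finset.le_sup (f := Function.update W j (F ∙ x)) hjs
      rwa [Function.update_self] at this
    have hjY : Q ⊓ W j ≤ Y := by
      have := Finset.le_sup (f := Function.update W j (Q ⊓ W j)) hjt
      rwa [Function.update_self] at this
    have hunion : (s ∪ t).sup W ≤ X ⊔ Y := by
      apply Finset.sup_le
      intro i hi
      by_cases hij : i = j
      · subst hij
        rw [← hsup]
        exact sup_le_sup hjX hjY
      · rcases Finset.mem_union.1 hi with h | h
        · exact (hleX i h hij).trans le_sup_left
        · exact (hleY i h hij).trans le_sup_right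
    have hinter : ((s ∩ t).erase j).sup W ≤ X ⊓ Y := by
      apply Finset.sup_le
      intro i hi
      rw [Finset.mem_erase, Finset.mem_inter] at hi
      exact le_inf (hleX i hi.2.1 hi.1) (hleY i hi.2.2 hi.1)
    have e1 := Submodule.finrank_mono hunion
    have e2 := Submodule.finrank_mono hinter
    have e3 := Submodule.finrank_sup_add_finrank_inf_eq X Y
    have e4 := hW (s ∪ t)
    have e5 := hW ((s ∩ t).erase j)
    have e6 := Finset.card_erase_add_one (Finset.mem_inter.2 ⟨hjs, hjt⟩)
    have e7 := Finset.card_union_add_card_inter s t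
    omega
  · push Not at hj
    have h1 : ∀ i, finrank F (W i) = 1 := by
      intro i
      have h1 := hW {i}
      have h2 := hj i
      rw [Finset.sup_singleton, Finset.card_singleton] at h1
      omega
    have h2 : ∀ i, ∃ x ∈ W i, W i ≤ F ∙ x := by
      intro i
      have hne : W i ≠ ⊥ := by
        intro h; have := h1 i; rw [h] at this; simp at this
      obtain ⟨x, hxW, hx0⟩ := Submodule.exists_mem_ne_zero_of_ne_bot hne
      refine ⟨x, hxW, ?_⟩
      have hxle : (F ∙ x) ≤ W i := by simpa using hxW
      exact (Submodule.eq_of_le_of_finrank_eq hxle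
        (by rw [finrank_span_singleton hx0, h1])).ge
    choose x hxW hx using h2
    refine ⟨x, hxW, ?_⟩
    rw [linearIndependent_iff_card_le_finrank_span]
    refine (hW Finset.univ).trans ?_
    apply Submodule.finrank_mono
    apply Finset.sup_le
    intro i _
    refine (hx i).trans ?_
    apply Submodule.span_mono
    simp

/-- coordinates of `w ⊗ x`. -/
def lamTen {r : ℕ} {L : Type*} [Field L] (w : Fin r → L) (x : Fin 2 → L) :
    Fin r × Fin 2 → L := fun p => w p.1 * x p.2

def lamT {r : ℕ} {L : Type*} [Field L] (U : Submodule L (Fin r → L)) :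
    (Fin 2 → U) →ₗ[L] (Fin r × Fin 2 → L) where
  toFun f p := (f p.2 : Fin r → L) p.1
  map_add' f g := by ext p; simp
  map_smul' c f := by ext p; simp

open Module in
theorem lamT_finrank {r : ℕ} {L : Type*} [Field L] (U : Submodule L (Fin r → L)) :
    finrank L (LinearMap.range (lamT U)) = 2 * finrank L U := by
  rw [LinearMap.finrank_range_of_inj]
  · rw [Module.finrank_pi_fintype]; simp
  · intro f g h
    funext s
    ext t
    exact congrFun h (t, s)

theorem lamTen_mem {r : ℕ} {L : Type*} [Field L] (U : Submodule L (Fin r → L))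
    (w : Fin r → L) (hw : w ∈ U) (x : Fin 2 → L) : lamTen w x ∈ LinearMap.range (lamT U) := by
  refine ⟨fun s => x s • ⟨w, hw⟩, ?_⟩
  ext p
  simp [lamT, lamTen, mul_comm]

def lamTenL {r : ℕ} {L : Type*} [Field L] (w : Fin r → L) :
    (Fin 2 → L) →ₗ[L] (Fin r × Fin 2 → L) where
  toFun x := lamTen w x
  map_add' f g := by ext p; simp [lamTen, mul_add]
  map_smul' c f := by ext p; simp [lamTen]; ring

theorem lamTen_mem_of_span {r : ℕ} {L : Type*} [Field L] (S : Set (Fin r → L))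
    (P : Submodule L (Fin r × Fin 2 → L)) (x : Fin 2 → L)
    (h : ∀ w ∈ S, lamTen w x ∈ P) (w : Fin r → L) (hw : w ∈ Submodule.span L S) :
    lamTen w x ∈ P := by
  induction hw using Submodule.span_induction with
  | mem y hy => exact h y hy
  | zero => 
    have : lamTen (0 : Fin r → L) x = 0 := by ext p; simp [lamTen]
    rw [this]; exact P.zero_mem
  | add a b _ _ ha hb =>
    have : lamTen (a + b) x = lamTen a x + lamTen b x := by ext p; simp [lamTen, add_mul]
    rw [this]; exact P.add_mem ha hb
  | smul c a _ ha =>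
    have : lamTen (c • a) x = c • lamTen a x := by ext p; simp [lamTen, mul_assoc]
    rw [this]; exact P.smul_mem c ha

theorem lamT_range_le {r : ℕ} {L : Type*} [Field L] (S : Set (Fin r → L))
    (P : Submodule L (Fin r × Fin 2 → L))
    (h : ∀ w ∈ S, ∀ x, lamTen w x ∈ P) :
    LinearMap.range (lamT (Submodule.span L S)) ≤ P := by
  rintro _ ⟨f, rfl⟩
  have : lamT (Submodule.span L S) f =
      lamTen (f 0 : Fin r → L) ![1, 0] + lamTen (f 1 : Fin r → L) ![0, 1] := by
    ext ⟨t, s⟩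
    fin_cases s <;> simp [lamT, lamTen]
  rw [this]
  exact P.add_mem (lamTen_mem_of_span S P _ (fun w hw => h w hw _) _ (f 0).2)
    (lamTen_mem_of_span S P _ (fun w hw => h w hw _) _ (f 1).2)

open Module in
theorem lam_step1 {F : Type*} [Field F] {r : ℕ} {ι : Type*} [Fintype ι]
    (w : ι → Fin r → F)
    (hw : ∀ s : Finset ι, s.Nonempty → s.card < 2 * finrank F (Submodule.span F (w '' s)))
    (e : ι) : ∃ (x : ι → Fin 2 → F) (y : Fin 2 → F),
      LinearIndependent F (fun o : Option ι =>
        lamTen (w (o.elim e id)) (o.elim y x)) := by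
  classical
  let W : Option ι → Submodule F (Fin r × Fin 2 → F) :=
    fun o => LinearMap.range (lamTenL (w (o.elim e id)))
  obtain ⟨z, hz, hzi⟩ := lam_rado _ W rfl (by
    intro s
    rcases s.eq_empty_or_nonempty with rfl | hne
    · simp
    have h1 := hw (s.image (fun o => o.elim e id)) (hne.image _)
    have h2 : s.card ≤ (s.image (fun o => o.elim e id)).card + 1 := by
      have : s ⊆ insert none ((s.image (fun o => o.elim e id)).image some) := by
        intro o ho
        cases o with
        | none => simp
        | some i =>
          apply Finset.mem_insert_of_mem
          apply Finset.mem_image_of_mem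
          exact Finset.mem_image.2 ⟨some i, ho, rfl⟩
      refine (Finset.card_le_card this).trans ((Finset.card_insert_le _ _).trans ?_)
      have := Finset.card_image_le (s := s.image (fun o => o.elim e id)) (f := some)
      omega
    have h3 := Submodule.finrank_mono (lamT_range_le
      (w '' (s.image (fun o => o.elim e id) : Finset ι)) (s.sup W) (by
        rintro _ ⟨i, hi, rfl⟩ x
        obtain ⟨o, ho, rfl⟩ := Finset.mem_image.1 hi
        exact Finset.le_sup (f := W) ho ⟨x, rfl⟩))
    rw [lamT_finrank] at h3
    omega)
  choose q hq using hz
  refine ⟨fun i => q (some i), q none, ?_⟩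
  have : (fun o : Option ι => lamTen (w (o.elim e id))
      (o.elim (q none) (fun i => q (some i)))) = z := by
    funext o
    rw [← hq o]
    cases o <;> rfl
  rw [this]
  exact hzi

theorem lam_congr {L V ι : Type*} [Field L] [AddCommGroup V] [Module L V] {f g : ι → V}
    (hf : LinearIndependent L f) (h : f = g) : LinearIndependent L g := h ▸ hf

/-- Over the field of rational functions in generic `x i`, the vectors `w i ⊗ x i` together with
some vector of `w e ⊗ L²` are independent. -/
theorem lam_step1' {F : Type*} [Field F] {r : ℕ} {ι : Type*} [Fintype ι]
    (w : ι → Fin r → F)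
    (hw : ∀ s : Finset ι, s.Nonempty → s.card < 2 * Module.finrank F (Submodule.span F (w '' s)))
    (e : ι) : ∃ (y : Fin 2 → FractionRing (MvPolynomial (ι × Fin 2) F)),
      LinearIndependent (FractionRing (MvPolynomial (ι × Fin 2) F)) (fun o : Option ι =>
        lamTen (fun t => algebraMap (MvPolynomial (ι × Fin 2) F) (FractionRing (MvPolynomial (ι × Fin 2) F))
            (MvPolynomial.C (w (o.elim e id) t)))
          (o.elim y (fun i s => algebraMap (MvPolynomial (ι × Fin 2) F) _
            (MvPolynomial.X (i, s))))) := by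
  obtain ⟨x, y, h⟩ := lam_step1 w hw e
  refine ⟨fun s => algebraMap (MvPolynomial (ι × Fin 2) F) _ (MvPolynomial.C (y s)), ?_⟩
  have key := lam_spec (R := MvPolynomial (ι × Fin 2) F)
    (MvPolynomial.eval (fun p : ι × Fin 2 => x p.1 p.2))
    (fun (o : Option ι) (p : Fin r × Fin 2) => MvPolynomial.C (w (o.elim e id) p.1) *
      (o.elim (MvPolynomial.C (y p.2)) (fun i => MvPolynomial.X (i, p.2)))) (by
      have : (fun (o : Option ι) (p : Fin r × Fin 2) =>
          (MvPolynomial.eval (fun p : ι × Fin 2 => x p.1 p.2))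
            (MvPolynomial.C (w (o.elim e id) p.1) *
            (o.elim (MvPolynomial.C (y p.2)) (fun i => MvPolynomial.X (i, p.2))))) =
          (fun o : Option ι => lamTen (w (o.elim e id)) (o.elim y x)) := by
        funext o p
        cases o <;> simp [lamTen]
      rw [this]
      exact h)
  refine lam_congr key ?_
  funext o p
  cases o <;> simp [lamTen]

theorem lam_avoid' {L E ι : Type*} [Field L] [Infinite L] [AddCommGroup E] [Module L E] [Finite ι]
    (p : ι → Submodule L E) (hp : ∀ e, p e ≠ ⊤) : ∃ H, ∀ e, H ∉ p e := by
  by_contra hcon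
  push Not at hcon
  have hu : (⋃ i, (p i : Set E)) = Set.univ := by
    rw [Set.eq_univ_iff_forall]
    intro H
    obtain ⟨e, he⟩ := hcon H
    exact Set.mem_iUnion.2 ⟨e, he⟩
  obtain ⟨e, he⟩ := Subspace.exists_eq_top_of_iUnion_eq_univ hu
  exact hp e he

theorem lam_avoid {L E ι : Type*} [Field L] [Infinite L] [AddCommGroup E] [Module L E] [Finite ι]
    (D : Submodule L E) (p : ι → Submodule L E) (hp : ∀ e, ¬ D ≤ p e) :
    ∃ H ∈ D, ∀ e, H ∉ p e := by
  obtain ⟨H, hH⟩ := lam_avoid' (fun e => (p e).comap D.subtype) (by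
    intro e he
    apply hp e
    intro x hx
    have : (⟨x, hx⟩ : D) ∈ (p e).comap D.subtype := by rw [he]; trivial
    exact this)
  exact ⟨H.1, H.2, hH⟩

theorem lam_step2 {L : Type*} [Field L] [Infinite L] {r : ℕ} {ι : Type*} [Fintype ι]
    (w : ι → Fin r → L) (x : ι → Fin 2 → L)
    (h : ∀ e, ∃ y : Fin 2 → L, LinearIndependent L (fun o : Option ι =>
        lamTen (w (o.elim e id)) (o.elim y x))) (e₀ : ι) :
    ∃ Φ : Fin 2 → Fin r → L,
      LinearIndependent L (fun i => lamTen (w i) (fun s => ∑ t, Φ s t * w i t)) := by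
  classical
  have hx : LinearIndependent L (fun i => lamTen (w i) (x i)) := by
    obtain ⟨y, hy⟩ := h e₀
    exact hy.comp some (Option.some_injective _)
  let D : Submodule L (Module.Dual L (Fin r × Fin 2 → L)) :=
    (Submodule.span L (Set.range (fun i => lamTen (w i) (x i)))).dualAnnihilator
  have hp : ∀ e, ¬ D ≤ (LinearMap.range (lamTenL (w e))).dualAnnihilator := by
    intro e he
    obtain ⟨y, hy⟩ := h e
    have hy2 := (linearIndependent_option.1 hy).2
    obtain ⟨f, hf, hf2⟩ := Submodule.exists_dual_map_eq_bot_of_notMem hy2 inferInstance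
    have hfD : f ∈ D := by
      rw [Submodule.mem_dualAnnihilator]
      intro z hz
      have : f z ∈ Submodule.map f (Submodule.span L (Set.range
        ((fun o : Option ι => lamTen (w (o.elim e id)) (o.elim y x)) ∘ some))) :=
        Submodule.mem_map_of_mem hz
      rw [hf2] at this
      exact (Submodule.mem_bot L).1 this
    have h2 := he hfD
    rw [Submodule.mem_dualAnnihilator] at h2
    exact hf (h2 _ ⟨y, rfl⟩)
  obtain ⟨H, hHD, hH⟩ := lam_avoid D _ hp
  let a : Fin r → L := fun t => H (Pi.single (t, 0) 1)
  let b : Fin r → L := fun t => H (Pi.single (t, 1) 1)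
  have hform : ∀ (u : Fin r → L) (z : Fin 2 → L),
      H (lamTen u z) = z 0 * (∑ t, a t * u t) + z 1 * (∑ t, b t * u t) := by
    intro u z
    have : lamTen u z = ∑ t, ((z 0 * u t) • (Pi.single (t, 0) 1 : Fin r × Fin 2 → L) +
        (z 1 * u t) • (Pi.single (t, 1) 1 : Fin r × Fin 2 → L)) := by
      ext ⟨t', s⟩
      fin_cases s <;> simp [lamTen, Finset.sum_apply, Pi.single_apply, mul_comm]
    rw [this, map_sum, Finset.mul_sum, Finset.mul_sum, ← Finset.sum_add_distrib]
    apply Finset.sum_congr rfl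
    intro t _
    simp only [map_add, map_smul, smul_eq_mul, a, b]
    ring
  refine ⟨![b, fun t => - a t], ?_⟩
  have hc : ∀ i, ∃ c : Lˣ, (c : L) • lamTen (w i) (x i) =
      lamTen (w i) (fun s => ∑ t, (![b, fun t => - a t] : Fin 2 → Fin r → L) s t * w i t) := by
    intro i
    set α := ∑ t, a t * w i t with hα
    set β := ∑ t, b t * w i t with hβ
    have h0 : x i 0 * α + x i 1 * β = 0 := by
      rw [← hform]
      exact (Submodule.mem_dualAnnihilator _).1 hHD _ (Submodule.subset_span ⟨i, rfl⟩)
    have hab : ¬ (α = 0 ∧ β = 0) := by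
      rintro ⟨h1, h2⟩
      apply hH i
      change H ∈ (LinearMap.range (lamTenL (w i))).dualAnnihilator
      rw [Submodule.mem_dualAnnihilator]
      rintro _ ⟨z, rfl⟩
      change H (lamTen (w i) z) = 0
      rw [hform, ← hα, ← hβ, h1, h2]
      ring
    have hx0 : ¬ (x i 0 = 0 ∧ x i 1 = 0) := by
      rintro ⟨h1, h2⟩
      apply hx.ne_zero i
      ext ⟨t, s⟩
      fin_cases s <;> simp [lamTen, h1, h2]
    have hΦ : (fun s => ∑ t, (![b, fun t => - a t] : Fin 2 → Fin r → L) s t * w i t)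
        = ![β, -α] := by
      ext s
      fin_cases s <;> simp [hα, hβ]
    rw [hΦ]
    suffices ∃ c : L, c ≠ 0 ∧ c * x i 0 = β ∧ c * x i 1 = -α by
      obtain ⟨c, hc, h1, h2⟩ := this
      refine ⟨Units.mk0 c hc, ?_⟩
      ext ⟨t, s⟩
      fin_cases s
      · simp [lamTen, ← h1]; ring
      · simp only [lamTen, Units.val_mk0, Pi.smul_apply, smul_eq_mul]
        change c * (w i t * x i 1) = w i t * -α
        rw [← h2]; ring
    by_cases hz : x i 0 = 0
    · have hz1 : x i 1 ≠ 0 := fun h => hx0 ⟨hz, h⟩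
      have hb : β = 0 := by
        rw [hz, zero_mul, zero_add] at h0
        exact (mul_eq_zero.1 h0).resolve_left hz1
      have ha : α ≠ 0 := fun h => hab ⟨h, hb⟩
      refine ⟨-α / x i 1, div_ne_zero (neg_ne_zero.2 ha) hz1, ?_, ?_⟩
      · rw [hz, hb, mul_zero]
      · field_simp
    · have hb : β ≠ 0 := by
        intro hb
        rw [hb, mul_zero, add_zero] at h0
        exact hab ⟨(mul_eq_zero.1 h0).resolve_left hz, hb⟩
      refine ⟨β / x i 0, div_ne_zero hb hz, ?_, ?_⟩
      · field_simp
      · field_simp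
        linear_combination h0
  choose c hc using hc
  have := hx.units_smul c
  refine lam_congr this ?_
  funext i
  exact hc i

theorem lam_coord (F : Type*) [Field F] (r n : ℕ) (v : Fin n → (Fin r → F)) (A : Set (Fin n)) :
    RigidityIndep F 2 r n v A ↔ LinearIndependent (GenericField F 2 r) (fun i : A =>
      lamTen (fun t => algebraMap (MvPolynomial (Fin 2 × Fin r) F) (GenericField F 2 r)
        (MvPolynomial.C (v i t)))
      (fun s => ∑ t, algebraMap (MvPolynomial (Fin 2 × Fin r) F) (GenericField F 2 r)
        (MvPolynomial.X (s, t) * MvPolynomial.C (v i t)))) := by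
  unfold RigidityIndep
  let B := ((Pi.basisFun (GenericField F 2 r) (Fin r)).tensorProduct
    (Pi.basisFun (GenericField F 2 r) (Fin 2))).equivFun
  rw [← LinearMap.linearIndependent_iff B.toLinearMap B.ker]
  have hB : B.toLinearMap ∘ (fun i : A => rigidityVec F 2 r (v i)) = (fun i : A =>
      lamTen (fun t => algebraMap (MvPolynomial (Fin 2 × Fin r) F) (GenericField F 2 r)
        (MvPolynomial.C (v i t)))
      (fun s => ∑ t, algebraMap (MvPolynomial (Fin 2 × Fin r) F) (GenericField F 2 r)
        (MvPolynomial.X (s, t) * MvPolynomial.C (v i t)))) := by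
    funext i ⟨t, s⟩
    simp [B, rigidityVec, lamTen, Module.Basis.tensorProduct_repr_tmul_apply, mul_comm]
  exact ⟨fun h => lam_congr h hB, fun h => lam_congr h hB.symm⟩

theorem lam_suff (F : Type*) [Field F] (r n : ℕ) (v : Fin n → (Fin r → F)) (A : Set (Fin n))
    (h : ∀ A' ⊆ A, A'.Nonempty →
        A'.ncard < 2 * Module.finrank F (Submodule.span F (v '' A'))) :
    RigidityIndep F 2 r n v A := by
  classical
  rw [lam_coord]
  rcases A.eq_empty_or_nonempty with rfl | ⟨e₀, he₀⟩
  · exact linearIndependent_empty_type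
  let w : A → Fin r → F := fun i => v i
  have hw : ∀ s : Finset A, s.Nonempty →
      s.card < 2 * Module.finrank F (Submodule.span F (w '' s)) := by
    intro s hs
    have := h (Subtype.val '' (s : Set A)) (by rintro _ ⟨i, _, rfl⟩; exact i.2) (hs.to_set.image _)
    rw [Set.ncard_image_of_injective _ Subtype.val_injective, Set.ncard_coe_finset,
      Set.image_image] at this
    exact this
  have : Nonempty (A × Fin 2) := ⟨(⟨e₀, he₀⟩, 0)⟩
  have : Infinite (FractionRing (MvPolynomial (A × Fin 2) F)) :=
    Infinite.of_injective _ (IsFractionRing.injective (MvPolynomial (A × Fin 2) F) _)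
  obtain ⟨Φ, hΦ⟩ := lam_step2 (L := FractionRing (MvPolynomial (A × Fin 2) F))
    (fun i t => algebraMap (MvPolynomial (A × Fin 2) F) _ (MvPolynomial.C (w i t)))
    (fun i s => algebraMap (MvPolynomial (A × Fin 2) F) _ (MvPolynomial.X (i, s)))
    (fun e => lam_step1' w hw e) ⟨e₀, he₀⟩
  have key := lam_spec (R := MvPolynomial (Fin 2 × Fin r) F)
    (MvPolynomial.eval₂Hom ((algebraMap (MvPolynomial (A × Fin 2) F)
      (FractionRing (MvPolynomial (A × Fin 2) F))).comp MvPolynomial.C) (fun p => Φ p.1 p.2))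
    (fun (i : A) (p : Fin r × Fin 2) => MvPolynomial.C (w i p.1) *
      ∑ t, MvPolynomial.X (p.2, t) * MvPolynomial.C (w i t)) (by
      refine lam_congr hΦ ?_
      funext i p
      simp [lamTen])
  refine lam_congr key ?_
  funext i p
  simp [lamTen, w]

theorem lam_nec (F : Type*) [Field F] (r n : ℕ) (v : Fin n → (Fin r → F)) (A : Set (Fin n))
    (h : RigidityIndep F 2 r n v A) (A' : Set (Fin n)) (hA : A' ⊆ A) (hne : A'.Nonempty) :
    A'.ncard < 2 * Module.finrank F (Submodule.span F (v '' A')) := by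
  classical
  rw [lam_coord] at h
  have h' := h.comp (Set.inclusion hA) (Set.inclusion_injective hA)
  set K := GenericField F 2 r
  let φ : F →+* K := (algebraMap (MvPolynomial (Fin 2 × Fin r) F) K).comp MvPolynomial.C
  let Φ : Fin 2 → Fin r → K := fun s t =>
    algebraMap (MvPolynomial (Fin 2 × Fin r) F) K (MvPolynomial.X (s, t))
  let w : Fin n → Fin r → K := fun i t => φ (v i t)
  let g : A' → Fin r × Fin 2 → K := fun i => lamTen (w i) (fun s => ∑ t, Φ s t * w i t)
  have hg : LinearIndependent K g := by
    refine lam_congr h' ?_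
    funext i p
    simp [g, lamTen, w, φ, Φ]
    rfl
  -- the dimension does not grow under the field extension
  have hdim : Module.finrank K (Submodule.span K (w '' A')) ≤
      Module.finrank F (Submodule.span F (v '' A')) := by
    obtain ⟨t, -, ht, hspan, -⟩ := Submodule.exists_finset_span_eq_linearIndepOn F (v '' A')
    rw [← ht]
    have hle : Submodule.span K (w '' A') ≤
        Submodule.span K ((t.image (fun u : Fin r → F => (fun k => φ (u k) : Fin r → K)) :
          Finset (Fin r → K)) : Set (Fin r → K)) := by
      rw [Submodule.span_le]
      rintro _ ⟨i, hi, rfl⟩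
      have hv : v i ∈ Submodule.span F (t : Set (Fin r → F)) := by
        rw [hspan]
        exact Submodule.subset_span ⟨i, hi, rfl⟩
      change (fun k => φ (v i k)) ∈ Submodule.span K _
      generalize v i = u at hv
      induction hv using Submodule.span_induction with
      | mem y hy =>
        apply Submodule.subset_span
        rw [Finset.coe_image]
        exact ⟨y, hy, rfl⟩
      | zero =>
        have : (fun k => φ ((0 : Fin r → F) k)) = 0 := by ext k; simp
        rw [this]
        exact Submodule.zero_mem _
      | add a b _ _ ha hb =>
        have : (fun k => φ ((a + b) k)) = (fun k => φ (a k)) + (fun k => φ (b k)) := by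
          ext k; simp
        rw [this]
        exact Submodule.add_mem _ ha hb
      | smul c a _ ha =>
        have : (fun k => φ ((c • a) k)) = φ c • (fun k => φ (a k)) := by
          ext k; simp
        rw [this]
        exact Submodule.smul_mem _ _ ha
    exact (Submodule.finrank_mono hle).trans
      ((finrank_span_finset_le_card _).trans Finset.card_image_le)
  let P := LinearMap.range (lamT (Submodule.span K (w '' A')))
  have hP : Module.finrank K P = 2 * Module.finrank K (Submodule.span K (w '' A')) :=
    lamT_finrank _
  let H : (Fin r × Fin 2 → K) →ₗ[K] K :=
    { toFun := fun f => ∑ t, (Φ 0 t * f (t, 1) - Φ 1 t * f (t, 0))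
      map_add' := by
        intro f g
        rw [← Finset.sum_add_distrib]
        exact Finset.sum_congr rfl (fun t _ => by simp only [Pi.add_apply]; ring)
      map_smul' := by
        intro c f
        simp only [RingHom.id_apply, smul_eq_mul, Finset.mul_sum]
        exact Finset.sum_congr rfl (fun t _ => by simp only [Pi.smul_apply, smul_eq_mul]; ring) }
  have hH : ∀ (u : Fin r → K) (z : Fin 2 → K),
      H (lamTen u z) = (∑ t, Φ 0 t * u t) * z 1 - (∑ t, Φ 1 t * u t) * z 0 := by
    intro u z
    change ∑ t, (Φ 0 t * lamTen u z (t, 1) - Φ 1 t * lamTen u z (t, 0)) = _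
    rw [Finset.sum_mul, Finset.sum_mul, ← Finset.sum_sub_distrib]
    exact Finset.sum_congr rfl (fun t _ => by simp only [lamTen]; ring)
  have hmem : ∀ i ∈ A', ∀ z, lamTen (w i) z ∈ P := fun i hi z =>
    lamTen_mem _ _ (Submodule.subset_span (Set.mem_image_of_mem w hi)) z
  have hspan : Submodule.span K (Set.range g) ≤ P ⊓ LinearMap.ker H := by
    rw [Submodule.span_le]
    rintro _ ⟨i, rfl⟩
    refine ⟨hmem i i.2 _, ?_⟩
    change H (g i) = 0
    rw [hH]
    ring
  have hlt : P ⊓ LinearMap.ker H < P := by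
    refine lt_of_le_of_ne inf_le_left ?_
    intro heq
    obtain ⟨i, hi⟩ := hne
    have hz : ∀ z, H (lamTen (w i) z) = 0 := by
      intro z
      have := hmem i hi z
      rw [← heq] at this
      exact this.2
    have z0 := hz ![0, 1]
    have z1 := hz ![1, 0]
    rw [hH] at z0 z1
    simp at z0 z1
    apply hg.ne_zero ⟨i, hi⟩
    ext ⟨t, s⟩
    fin_cases s <;> simp [g, lamTen, z0, z1]
  have hcard : A'.ncard = Module.finrank K (Submodule.span K (Set.range g)) := by
    rw [finrank_span_eq_card hg, Set.ncard_eq_toFinset_card', Set.toFinset_card]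
  have e1 := Submodule.finrank_mono hspan
  have e2 := Submodule.finrank_lt_finrank_of_lt hlt
  omega

/-- **Generalized Laman theorem: `R²(M) = L²(M)`.**
Let `F` be a field and `v 1, …, v n ∈ F^r`.  A subset `A ⊆ {1,…,n}` is
`2`-rigidity independent if and only if for every nonempty `A' ⊆ A` one has
`2 · dim span{v i : i ∈ A'} > |A'|`. -/
theorem rigidity_two_eq_laman_two (F : Type*) [Field F] (r n : ℕ)
    (v : Fin n → (Fin r → F)) (A : Set (Fin n)) :
    RigidityIndep F 2 r n v A ↔
      ∀ A' ⊆ A, A'.Nonempty →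
        A'.ncard < 2 * Module.finrank F (Submodule.span F (v '' A')) :=
  ⟨fun h A' hA hne => lam_nec F r n v A h A' hA hne, lam_suff F r n v A⟩
end

section
/- Let F be a field, d ≥ 2 an integer, and v_1, …, v_n ∈ F^r. Let g : F^r → F^r be an invertible F-linear map and c_1, …, c_n ∈ F nonzero scalars, and set v'_i = g(c_i · v_i) for i = 1,…,n. Then for every A ⊆ {1,…,n}, A is d-rigidity independent with respect to the vectors v_1,…,v_n if and only if A is d-rigidity independent with respect to the vectors v'_1,…,v'_n. (The d-rigidity matroid is a projective invariant of the representation.) -/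
open scoped TensorProduct

/-- Coordinate form of rigidity independence. -/
theorem rigidityIndep_iff_coord (F : Type*) [Field F] (d r n : ℕ) (v : Fin n → (Fin r → F))
    (A : Set (Fin n)) [Fintype A] :
    RigidityIndep F d r n v A ↔ ∀ a : A → GenericField F d r,
      (∀ t s, ∑ i : A, a i * (algebraMap (MvPolynomial (Fin d × Fin r) F) (GenericField F d r)
          (MvPolynomial.C (v i t)) *
        algebraMap (MvPolynomial (Fin d × Fin r) F) (GenericField F d r)
          (∑ u, MvPolynomial.X (s, u) * MvPolynomial.C (v i u))) = 0) →
      ∀ i, a i = 0 := by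
  unfold RigidityIndep
  rw [Fintype.linearIndependent_iff]
  refine forall_congr' fun a => ?_
  let b := (Pi.basisFun (GenericField F d r) (Fin r)).tensorProduct
    (Pi.basisFun (GenericField F d r) (Fin d))
  have key : (∑ i : A, a i • rigidityVec F d r (v i) = 0) ↔
      (∀ t s, ∑ i : A, a i * (algebraMap (MvPolynomial (Fin d × Fin r) F) (GenericField F d r)
          (MvPolynomial.C (v i t)) *
        algebraMap (MvPolynomial (Fin d × Fin r) F) (GenericField F d r)
          (∑ u, MvPolynomial.X (s, u) * MvPolynomial.C (v i u))) = 0) := by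
    rw [← b.repr.map_eq_zero_iff, Finsupp.ext_iff, Prod.forall]
    refine forall_congr' fun t => forall_congr' fun s => ?_
    simp only [map_sum, map_smul, Finsupp.coe_finsetSum, Finset.sum_apply, Finsupp.coe_smul,
      Pi.smul_apply, smul_eq_mul, rigidityVec, b, Module.Basis.tensorProduct_repr_tmul_apply,
      Pi.basisFun_repr, Finsupp.coe_zero, Pi.zero_apply]
    simp only [mul_comm]
  rw [key]

/-- The substitution `X (s, u) ↦ Σ_t X (s, t) g_{t u}`. -/
noncomputable def rigSubst (F : Type*) [Field F] (d r : ℕ)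
    (g : (Fin r → F) →ₗ[F] (Fin r → F)) :
    MvPolynomial (Fin d × Fin r) F →ₐ[F] MvPolynomial (Fin d × Fin r) F :=
  MvPolynomial.aeval fun p : Fin d × Fin r =>
    ∑ t, MvPolynomial.X (p.1, t) * MvPolynomial.C (g (Pi.single p.2 1) t)

theorem lin_coord {F : Type*} [Field F] {r : ℕ}
    (g : (Fin r → F) →ₗ[F] (Fin r → F)) (w : Fin r → F) (t : Fin r) :
    g w t = ∑ u, g (Pi.single u 1) t * w u := by
  conv_lhs => rw [pi_eq_sum_univ' w]
  simp [Finset.sum_apply, mul_comm]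

theorem rigSubst_form (F : Type*) [Field F] (d r : ℕ)
    (g : (Fin r → F) →ₗ[F] (Fin r → F)) (w : Fin r → F) (s : Fin d) :
    rigSubst F d r g (∑ u, MvPolynomial.X (s, u) * MvPolynomial.C (w u)) =
      ∑ u, MvPolynomial.X (s, u) * MvPolynomial.C (g w u) := by
  simp only [lin_coord g w, map_sum, map_mul, rigSubst, MvPolynomial.aeval_X,
    MvPolynomial.algHom_C, Finset.sum_mul, Finset.mul_sum, MvPolynomial.algebraMap_eq]
  rw [Finset.sum_comm]
  simp only [mul_assoc]

theorem rigSubst_comp (F : Type*) [Field F] (d r : ℕ)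
    (g h : (Fin r → F) →ₗ[F] (Fin r → F)) (hgh : ∀ w, g (h w) = w)
    (p : MvPolynomial (Fin d × Fin r) F) :
    rigSubst F d r g (rigSubst F d r h p) = p := by
  have : (rigSubst F d r g).comp (rigSubst F d r h) = AlgHom.id F _ := by
    apply MvPolynomial.algHom_ext
    rintro ⟨s, u⟩
    have h1 : rigSubst F d r h (MvPolynomial.X (s, u)) =
      ∑ t, MvPolynomial.X (s, t) * MvPolynomial.C (h (Pi.single u 1) t) := by
      simp [rigSubst]
    rw [AlgHom.comp_apply, h1, rigSubst_form, hgh]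
    simp [Pi.single_apply]
  exact DFunLike.congr_fun this p

theorem rigidity_abstract {F K : Type*} [Field F] [Field K] (d r n : ℕ)
    (φ : MvPolynomial (Fin d × Fin r) F →+* K) (σ : K →+* K)
    (v : Fin n → (Fin r → F))
    (g : (Fin r → F) →ₗ[F] (Fin r → F)) (c : Fin n → F)
    (hσ : ∀ p, σ (φ p) = φ (rigSubst F d r g p))
    (hφ : ∀ i, φ (MvPolynomial.C (c i)) ≠ 0)
    (A : Set (Fin n)) [Fintype A]
    (H : ∀ a : A → K,
      (∀ t s, ∑ i : A, a i * (φ (MvPolynomial.C (g (c i • v i) t)) *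
        φ (∑ u, MvPolynomial.X (s, u) * MvPolynomial.C (g (c i • v i) u))) = 0) →
      ∀ i, a i = 0) (a : A → K)
    (ha : ∀ t s, ∑ i : A, a i * (φ (MvPolynomial.C (v i t)) *
        φ (∑ u, MvPolynomial.X (s, u) * MvPolynomial.C (v i u))) = 0) (i : A) : a i = 0 := by
  have hb := H (fun i => σ (a i) * (φ (MvPolynomial.C (c i)))⁻¹ ^ 2) ?_ i
  · have h2 : σ (a i) = 0 := by
      rcases mul_eq_zero.1 hb with h | h
      · exact h
      · exact absurd h (pow_ne_zero _ (inv_ne_zero (hφ i)))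
    exact (map_eq_zero σ).1 h2
  · intro t s
    have h1 : ∀ u, ∑ i : A, σ (a i) * (φ (MvPolynomial.C (v i u)) *
        φ (∑ u, MvPolynomial.X (s, u) * MvPolynomial.C (g (v i) u))) = 0 := by
      intro u
      have := congrArg σ (ha u s)
      rw [map_sum, map_zero] at this
      rw [← this]
      refine Finset.sum_congr rfl fun i _ => ?_
      rw [map_mul, map_mul]
      rw [hσ, hσ, rigSubst_form]
      simp [MvPolynomial.algHom_C]
    have h3 : ∑ u, φ (MvPolynomial.C (g (Pi.single u 1) t)) *
      ∑ i : A, σ (a i) * (φ (MvPolynomial.C (v i u)) *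
        φ (∑ u, MvPolynomial.X (s, u) * MvPolynomial.C (g (v i) u))) = 0 := by
      simp only [h1, mul_zero, Finset.sum_const_zero]
    rw [← h3]
    simp only [Finset.mul_sum (s := (Finset.univ : Finset A))]
    rw [Finset.sum_comm]
    refine Finset.sum_congr rfl fun i _ => ?_
    have e1 : φ (MvPolynomial.C (g (c i • v i) t)) = φ (MvPolynomial.C (c i)) *
        ∑ u, φ (MvPolynomial.C (g (Pi.single u 1) t)) * φ (MvPolynomial.C (v i u)) := by
      rw [map_smul, Pi.smul_apply, smul_eq_mul,
        show g (v i) t = _ from lin_coord g (v i) t]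
      simp only [map_mul, map_sum]
    have e2 : φ (∑ u, MvPolynomial.X (s, u) * MvPolynomial.C (g (c i • v i) u)) =
        φ (MvPolynomial.C (c i)) *
          φ (∑ u, MvPolynomial.X (s, u) * MvPolynomial.C (g (v i) u)) := by
      rw [← map_mul, Finset.mul_sum]
      congr 1
      refine Finset.sum_congr rfl fun u _ => ?_
      rw [map_smul, Pi.smul_apply, smul_eq_mul, map_mul]
      ring
    rw [e1, e2]
    have hne := hφ i
    generalize φ (∑ u, MvPolynomial.X (s, u) * MvPolynomial.C (g (v i) u)) = y
    generalize φ (MvPolynomial.C (c i)) = x at hne ⊢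
    trans σ (a i) * ((∑ u, φ (MvPolynomial.C (g (Pi.single u 1) t)) *
      φ (MvPolynomial.C (v i u))) * y)
    · field_simp
    · rw [Finset.sum_mul, Finset.mul_sum]
      exact Finset.sum_congr rfl fun u _ => by ring

theorem rigidity_one_direction (F : Type*) [Field F] (d r n : ℕ)
    (v : Fin n → (Fin r → F))
    (g : (Fin r → F) ≃ₗ[F] (Fin r → F)) (c : Fin n → F) (hc : ∀ i, c i ≠ 0)
    (A : Set (Fin n)) (H : RigidityIndep F d r n (fun i => g (c i • v i)) A) :
    RigidityIndep F d r n v A := by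
  classical
  have : Fintype A := Fintype.ofFinite A
  rw [rigidityIndep_iff_coord] at H ⊢
  let φ := algebraMap (MvPolynomial (Fin d × Fin r) F) (GenericField F d r)
  have hinj : Function.Injective (rigSubst F d r g.toLinearMap).toRingHom :=
    Function.LeftInverse.injective (g := rigSubst F d r g.symm.toLinearMap)
      (rigSubst_comp F d r g.symm.toLinearMap g.toLinearMap (by simp))
  let σ : GenericField F d r →+* GenericField F d r := IsFractionRing.map hinj
  have hσ : ∀ p, σ (φ p) = φ (rigSubst F d r g.toLinearMap p) := fun p => by
    simp only [σ, φ, IsFractionRing.map, IsLocalization.map_eq]; rfl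
  have hφ : ∀ x : F, x ≠ 0 → φ (MvPolynomial.C x) ≠ 0 := fun x hx => by
    simpa [φ] using hx
  exact rigidity_abstract d r n φ σ v g.toLinearMap c hσ (fun i => hφ _ (hc i)) A H

/-- **Proposition (projective invariance of the rigidity matroid).**
Let `F` be a field, `d ≥ 2`, and `v 1, …, v n ∈ F^r`.  If `g : F^r → F^r` is an
invertible linear map and `c 1, …, c n` are nonzero scalars, then a subset
`A ⊆ {1,…,n}` is `d`-rigidity independent with respect to `v 1, …, v n` if and
only if it is `d`-rigidity independent with respect to the projectively
equivalent vectors `v' i = g (c i • v i)`. -/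
theorem rigidity_projective_invariance (F : Type*) [Field F] (d r n : ℕ)
    (hd : 2 ≤ d) (v : Fin n → (Fin r → F))
    (g : (Fin r → F) ≃ₗ[F] (Fin r → F)) (c : Fin n → F) (hc : ∀ i, c i ≠ 0)
    (A : Set (Fin n)) :
    RigidityIndep F d r n v A ↔
      RigidityIndep F d r n (fun i => g (c i • v i)) A := by
  constructor
  · intro H
    refine rigidity_one_direction F d r n _ g.symm (fun i => (c i)⁻¹)
      (fun i => inv_ne_zero (hc i)) A ?_
    convert H using 2 with i
    simp [hc i]
  · exact rigidity_one_direction F d r n v g c hc A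
end

section
/- Let F be a field and let v_1, …, v_n ∈ F^r span F^r. Then for every integer d ≥ r and every subset A ⊆ {1,…,n}: A is d-rigidity independent if and only if A is r-rigidity independent. (The tower of rigidity matroids R^1(M) ⊆ R^2(M) ⊆ R^3(M) ⊆ … stabilizes at d = r.) -/
open scoped TensorProduct

/-- The generic `d × r` matrix is injective when `r ≤ d`. -/
theorem generic_mulVec_injective (F : Type*) [Field F] (d r : ℕ) (hd : r ≤ d) :
    Function.Injective (Matrix.mulVecLin (Matrix.of fun (s : Fin d) (t : Fin r) =>
      algebraMap (MvPolynomial (Fin d × Fin r) F) (GenericField F d r)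
        (MvPolynomial.X (s, t)))) := by
  rw [← LinearMap.ker_eq_bot, LinearMap.ker_eq_bot']
  intro x hx
  let e : Fin r × Fin r → Fin d × Fin r := fun p => (Fin.castLE hd p.1, p.2)
  have he : Function.Injective e := by
    rintro ⟨a, b⟩ ⟨a', b'⟩ h
    simpa [e] using h
  let g : MvPolynomial (Fin r × Fin r) F →+* GenericField F d r :=
    (algebraMap (MvPolynomial (Fin d × Fin r) F) (GenericField F d r)).comp
      (MvPolynomial.rename e : _ →ₐ[F] _).toRingHom
  have hg : Function.Injective g :=
    (IsFractionRing.injective (MvPolynomial (Fin d × Fin r) F) (GenericField F d r)).comp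
      (MvPolynomial.rename_injective e he)
  have hdet : (g.mapMatrix (Matrix.mvPolynomialX (Fin r) (Fin r) F)).det ≠ 0 := by
    rw [← RingHom.map_det]
    exact (map_ne_zero_iff g hg).mpr (Matrix.det_mvPolynomialX_ne_zero (Fin r) F)
  apply Matrix.eq_zero_of_mulVec_eq_zero hdet
  funext s
  have := congrFun hx (Fin.castLE hd s)
  simpa [Matrix.mulVec, dotProduct, g, e, Matrix.mvPolynomialX_apply] using this

/-- For `r ≤ d`, rigidity independence is independence of the squares `v i ⊗ v i` over `F`. -/
theorem rigidityIndep_iff_squares (F : Type*) [Field F] (d r n : ℕ) (hd : r ≤ d)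
    (v : Fin n → (Fin r → F)) (A : Set (Fin n)) :
    RigidityIndep F d r n v A ↔
      LinearIndependent F (fun (i : A) (p : Fin r × Fin r) => v i p.1 * v i p.2) := by
  classical
  unfold RigidityIndep
  let K := GenericField F d r
  let Φ := Matrix.mulVecLin (Matrix.of fun (s : Fin d) (t : Fin r) =>
      algebraMap (MvPolynomial (Fin d × Fin r) F) (GenericField F d r)
        (MvPolynomial.X (s, t)))
  have hΦ : Function.Injective (LinearMap.lTensor (Fin r → K) Φ) :=
    Module.Flat.lTensor_preserves_injective_linearMap Φ (generic_mulVec_injective F d r hd)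
  let w : A → (Fin r → K) := fun i t => algebraMap F K (v i t)
  let b := (Pi.basisFun K (Fin r)).tensorProduct (Pi.basisFun K (Fin r))
  have h1 : (fun i : A => rigidityVec F d r (v i)) =
      (LinearMap.lTensor (Fin r → K) Φ) ∘ fun i => w i ⊗ₜ[K] w i := by
    funext i
    simp only [Function.comp, LinearMap.lTensor_tmul, rigidityVec]
    congr 1
    funext s
    simp only [Φ, Matrix.mulVecLin_apply, Matrix.mulVec, dotProduct, Matrix.of_apply, map_mul]
    rfl
  have h2 : (b.equivFun.toLinearMap ∘ fun i => w i ⊗ₜ[K] w i) =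
      fun i : A => algebraMap F K ∘ fun p : Fin r × Fin r => v i p.1 * v i p.2 := by
    funext i p
    obtain ⟨s, t⟩ := p
    refine (Module.Basis.tensorProduct_repr_tmul_apply (Pi.basisFun K (Fin r))
      (Pi.basisFun K (Fin r)) (w i) (w i) s t).trans ?_
    simp [w, mul_comm]
  rw [h1, LinearMap.linearIndependent_iff _ (LinearMap.ker_eq_bot.mpr hΦ),
    ← LinearMap.linearIndependent_iff b.equivFun.toLinearMap b.equivFun.ker, h2,
    linearIndependent_algebraMap_comp_iff]

/-- **Proposition (stabilization of the rigidity matroids).**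
Let `F` be a field and suppose `v 1, …, v n` span `F^r`.  Then for every
integer `d ≥ r` and every `A ⊆ {1,…,n}`, `A` is `d`-rigidity independent if
and only if `A` is `r`-rigidity independent; that is, the tower
`R¹(M) ⊆ R²(M) ⊆ ⋯` stabilizes at `d = r`. -/
theorem rigidity_stabilization (F : Type*) [Field F] (r n : ℕ)
    (v : Fin n → (Fin r → F)) (hspan : Submodule.span F (Set.range v) = ⊤)
    (d : ℕ) (hd : r ≤ d) (A : Set (Fin n)) :
    RigidityIndep F d r n v A ↔ RigidityIndep F r r n v A := by
  rw [rigidityIndep_iff_squares F d r n hd, rigidityIndep_iff_squares F r r n le_rfl]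
end

section
/- Let F be a field, d a positive integer, and v_1, …, v_n ∈ F^r. If a subset A ⊆ {1,…,n} is d-rigidity independent, then A is (d+1)-rigidity independent; that is, R^d(M) ⊆ R^{d+1}(M). -/
open scoped TensorProduct

/-- **Proposition (`R^d(M) ⊆ R^{d+1}(M)`).**
Let `F` be a field, `d` a positive integer, and `v 1, …, v n ∈ F^r`.  If a
subset `A ⊆ {1,…,n}` is `d`-rigidity independent, then `A` is
`(d+1)`-rigidity independent. -/
theorem rigidity_mono (F : Type*) [Field F] (d r n : ℕ) (hd : 0 < d)
    (v : Fin n → (Fin r → F)) (A : Set (Fin n))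
    (hA : RigidityIndep F d r n v A) :
    RigidityIndep F (d + 1) r n v A := by
  classical
  unfold RigidityIndep at hA ⊢
  -- the inclusion of the polynomial rings and of the fraction fields
  let ρ : MvPolynomial (Fin d × Fin r) F →+* MvPolynomial (Fin (d + 1) × Fin r) F :=
    (MvPolynomial.rename (fun p : Fin d × Fin r => (p.1.castSucc, p.2))).toRingHom
  have hρ : Function.Injective ρ := by
    apply MvPolynomial.rename_injective
    rintro ⟨a, b⟩ ⟨a', b'⟩ h
    simpa using h
  let f : GenericField F d r →+* GenericField F (d + 1) r := IsFractionRing.map hρ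
  have hf : ∀ p, f (algebraMap _ _ p) = algebraMap _ _ (ρ p) := fun p =>
    IsLocalization.map_eq _ p
  obtain ⟨g, hg⟩ := LinearMap.exists_leftInverse_of_injective
    (Finsupp.linearCombination (GenericField F d r)
      (fun i : A => rigidityVec F d r (v i))) (LinearMap.ker_eq_bot.2 hA)
  have hg' : ∀ i j : A, (g (rigidityVec F d r (v i))) j = if i = j then 1 else 0 := by
    intro i j
    have := congrArg (fun x => x j) (LinearMap.congr_fun hg (Finsupp.single i 1))
    simpa [Finsupp.single_apply] using this
  let B : A → ((Fin r → GenericField F d r) →ₗ[GenericField F d r]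
      (Fin d → GenericField F d r) →ₗ[GenericField F d r] GenericField F d r) := fun j =>
    (TensorProduct.mk _ _ _).compr₂ (Finsupp.lapply j ∘ₗ g)
  let M : A → Matrix (Fin r) (Fin d) (GenericField F d r) := fun j =>
    LinearMap.toMatrix₂' (GenericField F d r) (B j)
  have hM : ∀ j x y, ∑ s, ∑ t, x s * y t * M j s t = g (x ⊗ₜ y) j := by
    intro j x y
    have h1 : Matrix.toLinearMap₂' (GenericField F d r) (M j) x y = B j x y := by
      simp [M]
    rw [Matrix.toLinearMap₂'_apply] at h1
    simpa [B, mul_assoc] using h1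
  let G : A → ((Fin r → GenericField F (d + 1) r) ⊗[GenericField F (d + 1) r]
      (Fin (d + 1) → GenericField F (d + 1) r) →ₗ[GenericField F (d + 1) r]
        GenericField F (d + 1) r) := fun j =>
    TensorProduct.lift ((Matrix.toLinearMap₂' (GenericField F (d + 1) r)
      ((M j).map f)).compl₂ (LinearMap.funLeft _ _ Fin.castSucc))
  have hG : ∀ i j : A, G j (rigidityVec F (d + 1) r (v i)) = if i = j then 1 else 0 := by
    intro i j
    have h1 := congrArg f (hg' i j)
    unfold rigidityVec at h1 ⊢
    rw [← hM] at h1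
    have h2 : f (if i = j then 1 else 0) = if i = j then 1 else 0 := by
      split_ifs <;> simp
    rw [h2] at h1
    rw [← h1]
    simp only [G, TensorProduct.lift.tmul, LinearMap.compl₂_apply,
      Matrix.toLinearMap₂'_apply, map_sum, map_mul f, hf, LinearMap.funLeft_apply,
      Matrix.map_apply, smul_eq_mul]
    simp [ρ, mul_assoc]
  rw [Fintype.linearIndependent_iff]
  intro c hc j
  have := congrArg (G j) hc
  simpa [hG] using this
end

section
/- Let F be a field with more than two elements and let μ ∈ F with μ ≠ 0 and μ ≠ 1. Let e_1, e_2 be the standard basis of F², and set v_1 = e_1, v_2 = e_1 + e_2, v_3 = e_2, v_4 = e_1 + μ·e_2 (a representation of the uniform matroid U_{2,4}). Let d ≥ 2 be an integer, let K = F(Φ) be the field of rational functions over F in the d·2 entries of a generic d × 2 matrix Φ : K² → K^d, and put w_i = v_i ⊗ Φ(v_i) ∈ K² ⊗_K K^d for i = 1,…,4. Then (μ − 1)·w_1 − μ·w_2 + (μ − μ²)·w_3 + w_4 = 0, and every 3-element subset of {w_1, w_2, w_3, w_4} is K-linearly independent. Consequently the d-rigidity matroid R^d(U_{2,4}) is the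 uniform matroid U_{3,4} for every integer d ≥ 2. -/
open scoped TensorProduct

theorem U24_aux_indep {K V : Type*} [Field K] [AddCommGroup V] [Module K V]
    (k : K) (hk0 : k ≠ 0) (hk1 : k ≠ 1) (P M Q : V)
    (hPMQ : ∀ x y z : K, x • P + y • M + z • Q = 0 → x = 0 ∧ y = 0 ∧ z = 0)
    (w : Fin 4 → V) (h0 : w 0 = P) (h1 : w 1 = P + M + Q) (h2 : w 2 = Q)
    (h3 : w 3 = P + k • M + (k ^ 2) • Q) (A : Set (Fin 4)) (i : Fin 4) (hi : i ∉ A) :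
    LinearIndepOn K w A := by
  rw [linearIndepOn_iff]
  intro l hl hsum
  have hli : l i = 0 := by
    rw [Finsupp.mem_supported'] at hl
    exact hl i hi
  rw [Finsupp.linearCombination_apply, Finsupp.sum_fintype _ _ (by simp), Fin.sum_univ_four,
    h0, h1, h2, h3] at hsum
  obtain ⟨e1, e2, e3⟩ := hPMQ (l 0 + l 1 + l 3) (l 1 + k * l 3) (l 1 + l 2 + k ^ 2 * l 3) (by
    rw [← hsum]; module)
  have hk1' : k - 1 ≠ 0 := sub_ne_zero.mpr hk1
  have key : l 3 = 0 := by
    fin_cases i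
    · simp only [Fin.zero_eta] at hli
      have : (k - 1) * l 3 = 0 := by linear_combination e2 - e1 + hli
      simpa [hk1'] using this
    · simp only [Fin.mk_one] at hli
      have : k * l 3 = 0 := by linear_combination e2 - hli
      simpa [hk0] using this
    · simp only [Fin.reduceFinMk] at hli
      have : k * (k - 1) * l 3 = 0 := by linear_combination e3 - e2 - hli
      simpa [hk0, hk1'] using this
    · simpa using hli
  have a1 : l 1 = 0 := by linear_combination e2 - k * key
  have a0 : l 0 = 0 := by linear_combination e1 - a1 - key
  have a2 : l 2 = 0 := by linear_combination e3 - a1 - k ^ 2 * key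
  ext j
  fin_cases j <;> simp [a0, a1, a2, key]

theorem U24_aux_rel {K V : Type*} [Field K] [AddCommGroup V] [Module K V]
    (k : K) (P M Q : V) :
    (k - 1) • P - k • (P + M + Q) + (k - k ^ 2) • Q + (P + k • M + (k ^ 2) • Q) = 0 := by
  module

theorem U24_aux_expand {K V W : Type*} [Field K] [AddCommGroup V] [Module K V]
    [AddCommGroup W] [Module K W] (k : K) (e f : V) (a b : W) :
    (e + k • f) ⊗ₜ[K] (a + k • b) =
      e ⊗ₜ[K] a + k • (e ⊗ₜ[K] b + f ⊗ₜ[K] a) + (k ^ 2) • (f ⊗ₜ[K] b) := by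
  simp only [TensorProduct.add_tmul, TensorProduct.tmul_add,
    ← TensorProduct.smul_tmul', TensorProduct.tmul_smul]
  module

theorem U24_aux_PMQ {K : Type*} [Field K] {d : ℕ} (a b : Fin d → K) (s t : Fin d)
    (hdet : a s * b t - a t * b s ≠ 0) (x y z : K)
    (h : x • ((![1, 0] : Fin 2 → K) ⊗ₜ[K] a)
      + y • ((![1, 0] : Fin 2 → K) ⊗ₜ[K] b + (![0, 1] : Fin 2 → K) ⊗ₜ[K] a)
      + z • ((![0, 1] : Fin 2 → K) ⊗ₜ[K] b) = 0) : x = 0 ∧ y = 0 ∧ z = 0 := by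
  have hlin : ∀ p q : K, p • a + q • b = 0 → p = 0 ∧ q = 0 := by
    intro p q hpq
    have hs := congrFun hpq s
    have ht := congrFun hpq t
    simp only [Pi.add_apply, Pi.smul_apply, smul_eq_mul, Pi.zero_apply] at hs ht
    constructor
    · have : (a s * b t - a t * b s) * p = 0 := by linear_combination b t * hs - b s * ht
      simpa [hdet] using this
    · have : (a s * b t - a t * b s) * q = 0 := by linear_combination a s * ht - a t * hs
      simpa [hdet] using this
  have hT : ∀ i : Fin 2, _ := fun i => congrArg
    ((TensorProduct.lid K (Fin d → K)).toLinearMap ∘ₗ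
      LinearMap.rTensor (Fin d → K) (LinearMap.proj (R := K) (φ := fun _ : Fin 2 => K) i)) h
  have t0 := hT 0
  have t1 := hT 1
  simp at t0 t1
  obtain ⟨hx, hy⟩ := hlin _ _ t0
  obtain ⟨-, hz⟩ := hlin _ _ t1
  exact ⟨hx, hy, hz⟩

/-- **Example (`R^d(U_{2,4}) = U_{3,4}` for all `d ≥ 2`).**
Let `F` be a field with more than two elements, `μ ∈ F ∖ {0,1}`, and represent
`U_{2,4}` by `v 1 = e₁, v 2 = e₁+e₂, v 3 = e₂, v 4 = e₁+μe₂ ∈ F²`.  For `d ≥ 2`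
put `w i = v i ⊗ Φ(v i) ∈ K² ⊗_K K^d` with `Φ` the generic `d × 2` matrix over
`K = F(Φ)`.  Then `(μ-1)w₁ - μw₂ + (μ-μ²)w₃ + w₄ = 0`, every three of the
`w i` are `K`-linearly independent, and consequently the `d`-rigidity matroid
of `U_{2,4}` is the uniform matroid `U_{3,4}`. -/
theorem rigidity_U24 (F : Type*) [Field F]
    (hF : ∃ x y z : F, x ≠ y ∧ x ≠ z ∧ y ≠ z)
    (μ : F) (hμ0 : μ ≠ 0) (hμ1 : μ ≠ 1) (d : ℕ) (hd : 2 ≤ d) :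
    let v : Fin 4 → Fin 2 → F := ![![1, 0], ![1, 1], ![0, 1], ![1, μ]]
    let K := GenericField F d 2
    let kμ : K := algebraMap (MvPolynomial (Fin d × Fin 2) F) K (MvPolynomial.C μ)
    let w : Fin 4 → TensorProduct K (Fin 2 → K) (Fin d → K) :=
      fun i => rigidityVec F d 2 (v i)
    ((kμ - 1) • w 0 - kμ • w 1 + (kμ - kμ ^ 2) • w 2 + w 3 = 0) ∧
      (∀ i : Fin 4, LinearIndependent K (fun j : {j : Fin 4 // j ≠ i} => w j)) ∧
      (∀ A : Set (Fin 4), RigidityIndep F d 2 4 v A ↔ A.ncard ≤ 3) := by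
  intro v K kμ w
  let al := algebraMap (MvPolynomial (Fin d × Fin 2) F) K
  have hinj : Function.Injective al := IsFractionRing.injective _ _
  let a : Fin d → K := fun s => al (MvPolynomial.X (s, 0))
  let b : Fin d → K := fun s => al (MvPolynomial.X (s, 1))
  have hk0 : kμ ≠ 0 := by
    intro h
    apply hμ0
    apply MvPolynomial.C_injective (Fin d × Fin 2) F
    apply hinj
    simpa using h
  have hk1 : kμ ≠ 1 := by
    intro h
    apply hμ1
    apply MvPolynomial.C_injective (Fin d × Fin 2) F
    apply hinj
    simpa using h
  let s0 : Fin d := ⟨0, by omega⟩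
  let s1 : Fin d := ⟨1, by omega⟩
  have hs : s0 ≠ s1 := by simp [s0, s1]
  have hdet : a s0 * b s1 - a s1 * b s0 ≠ 0 := by
    intro h
    have h' : al (MvPolynomial.X (s0, 0) * MvPolynomial.X (s1, 1)
        - MvPolynomial.X (s1, 0) * MvPolynomial.X (s0, 1)) = al 0 := by
      simpa [a, b] using h
    have h2 := congrArg (MvPolynomial.eval
      (fun p : Fin d × Fin 2 => if p = (s0, 0) ∨ p = (s1, 1) then (1 : F) else 0)) (hinj h')
    simp [hs, hs.symm] at h2
  let P : TensorProduct K (Fin 2 → K) (Fin d → K) := (![1, 0] : Fin 2 → K) ⊗ₜ[K] a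
  let M : TensorProduct K (Fin 2 → K) (Fin d → K) :=
    (![1, 0] : Fin 2 → K) ⊗ₜ[K] b + (![0, 1] : Fin 2 → K) ⊗ₜ[K] a
  let Q : TensorProduct K (Fin 2 → K) (Fin d → K) := (![0, 1] : Fin 2 → K) ⊗ₜ[K] b
  have hPMQ : ∀ x y z : K, x • P + y • M + z • Q = 0 → x = 0 ∧ y = 0 ∧ z = 0 :=
    fun x y z h => U24_aux_PMQ a b s0 s1 hdet x y z h
  have hgen : ∀ p q : F, rigidityVec F d 2 ![p, q] =
      (al (MvPolynomial.C p) • (![1, 0] : Fin 2 → K) + al (MvPolynomial.C q) • ![0, 1]) ⊗ₜ[K]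
      (al (MvPolynomial.C p) • a + al (MvPolynomial.C q) • b) := by
    intro p q
    unfold rigidityVec
    congr 1
    · ext t
      fin_cases t <;> simp [al, K, Algebra.smul_def]
    · ext s
      simp [Fin.sum_univ_two, a, b, al, K, Algebra.smul_def, mul_comm]
  have h0 : w 0 = P := by
    have := hgen 1 0
    simp only [map_one, map_zero, one_smul, zero_smul, add_zero] at this
    exact this
  have h2 : w 2 = Q := by
    have := hgen 0 1
    simp only [map_one, map_zero, one_smul, zero_smul, zero_add] at this
    exact this
  have hm : ∀ m : F, rigidityVec F d 2 ![1, m] =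
      P + al (MvPolynomial.C m) • M + (al (MvPolynomial.C m) ^ 2) • Q := by
    intro m
    rw [hgen]
    simp only [map_one, one_smul]
    exact U24_aux_expand _ _ _ _ _
  have h1 : w 1 = P + M + Q := by
    have := hm 1
    simp only [map_one, one_smul, one_pow] at this
    exact this
  have h3 : w 3 = P + kμ • M + (kμ ^ 2) • Q := hm μ
  have hrel : (kμ - 1) • w 0 - kμ • w 1 + (kμ - kμ ^ 2) • w 2 + w 3 = 0 := by
    rw [h0, h1, h2, h3]
    exact U24_aux_rel kμ P M Q
  have hind := U24_aux_indep kμ hk0 hk1 P M Q hPMQ w h0 h1 h2 h3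
  refine ⟨hrel, fun i => hind {j | j ≠ i} i (by simp), fun A => ⟨fun hA => ?_, fun hA => ?_⟩⟩
  · by_contra hc
    have hAu : A = Set.univ := by
      apply Set.eq_of_subset_of_ncard_le (Set.subset_univ A)
      simp only [Set.ncard_univ, Nat.card_eq_fintype_card, Fintype.card_fin]
      omega
    subst hAu
    have hA' : LinearIndepOn K w Set.univ := hA
    rw [linearIndepOn_univ_iff] at hA'
    rw [Fintype.linearIndependent_iff] at hA'
    have := hA' ![kμ - 1, -kμ, kμ - kμ ^ 2, 1] (by
      rw [← hrel, Fin.sum_univ_four]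
      simp [sub_eq_add_neg]) 3
    simp at this
  · obtain ⟨i, hi⟩ : ∃ i, i ∉ A := by
      by_contra! hc
      rw [Set.eq_univ_of_forall hc] at hA
      simp [Set.ncard_univ] at hA
    exact hind A i hi
end
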